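/- arXiv:1010.2296 — 6 statements merged into one kernel-verified Lean document; each statement's English description precedes it below -/
import Mathlib

section
/- Let G be a finite connected simple graph and let D ⊆ V(G) be a connected two-way dominating set of G (that is, D is a dominating set, the induced subgraph G[D] is connected, and D contains every pendant vertex of G). Then the rainbow connection number of G satisfies rc(G) ≤ rc(G[D]) + 3. -/
open SimpleGraph Set

/-- The predicate that an edge colouring `c` makes `G` rainbow connected: every pair of
vertices is joined by a path no two of whose edges receive the same colour. -/
def RainbowConnectedUnder {V : Type*} (G : SimpleGraph V) (c : Sym2 V → ℕ) : Prop :=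
  ∀ u v : V, ∃ p : G.Walk u v, p.IsPath ∧ (p.edges.map c).Nodup

/-- The rainbow connection number of `G`: the least `n` such that some edge colouring
using colours `< n` makes `G` rainbow connected. -/
noncomputable def rc {V : Type*} (G : SimpleGraph V) : ℕ :=
  sInf {n | ∃ c : Sym2 V → ℕ, (∀ e ∈ G.edgeSet, c e < n) ∧ RainbowConnectedUnder G c}

/-- Degree of a vertex (as the cardinality of its neighbour set). -/
noncomputable def deg {V : Type*} (G : SimpleGraph V) (v : V) : ℕ := (G.neighborSet v).ncard

/-- `D` is a dominating set of `G`. -/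
def IsDominatingSet {V : Type*} (G : SimpleGraph V) (D : Set V) : Prop :=
  ∀ v : V, v ∈ D ∨ ∃ u ∈ D, G.Adj u v

/-- The connected domination number of `G`. -/
noncomputable def connDomNum {V : Type*} (G : SimpleGraph V) : ℕ :=
  sInf {n | ∃ D : Set V, D.ncard = n ∧ IsDominatingSet G D ∧ (G.induce D).Connected}

/-- Distance of a vertex `v` to a set of vertices `D`. -/
noncomputable def distSet {V : Type*} (G : SimpleGraph V) (D : Set V) (v : V) : ℕ :=
  sInf ((fun u => G.dist u v) '' D)

/-- Diameter of `G`. -/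
noncomputable def graphDiam {V : Type*} (G : SimpleGraph V) : ℕ :=
  sSup (Set.range fun p : V × V => G.dist p.1 p.2)

/-- Eccentricity of a vertex. -/
noncomputable def ecc {V : Type*} (G : SimpleGraph V) (v : V) : ℕ :=
  sSup (Set.range fun u => G.dist v u)

/-- Radius of `G`. -/
noncomputable def graphRadius {V : Type*} (G : SimpleGraph V) : ℕ :=
  sInf (Set.range fun v => ecc G v)

/-- `G` is an interval graph: vertices can be assigned nonempty closed real intervals such
that two distinct vertices are adjacent iff their intervals intersect. -/
def IsIntervalGraph {V : Type*} (G : SimpleGraph V) : Prop :=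
  ∃ a b : V → ℝ, (∀ v, a v ≤ b v) ∧
    ∀ u v : V, u ≠ v → (G.Adj u v ↔ (Set.Icc (a u) (b u) ∩ Set.Icc (a v) (b v)).Nonempty)

/-- `G` is a unit interval graph. -/
def IsUnitIntervalGraph {V : Type*} (G : SimpleGraph V) : Prop :=
  ∃ a : V → ℝ,
    ∀ u v : V, u ≠ v →
      (G.Adj u v ↔ (Set.Icc (a u) (a u + 1) ∩ Set.Icc (a v) (a v + 1)).Nonempty)

/-- `G` is a circular arc graph: vertices can be assigned nonempty closed arcs of a circle
(images of closed intervals in `AddCircle 1`) such that two distinct vertices are adjacent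
iff their arcs intersect. -/
def IsCircularArcGraph {V : Type*} (G : SimpleGraph V) : Prop :=
  ∃ a b : V → ℝ, (∀ v, a v ≤ b v) ∧
    ∀ u v : V, u ≠ v → (G.Adj u v ↔
      (((fun x : ℝ => (x : AddCircle (1:ℝ))) '' Set.Icc (a u) (b u)) ∩
        ((fun x : ℝ => (x : AddCircle (1:ℝ))) '' Set.Icc (a v) (b v))).Nonempty)

/-- There is a path from `x` to `y` avoiding the closed neighbourhood of `z`. -/
def HasAvoidingPath {V : Type*} (G : SimpleGraph V) (x y z : V) : Prop :=
  ∃ p : G.Walk x y, p.IsPath ∧ ∀ w ∈ p.support, w ≠ z ∧ ¬ G.Adj z w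

/-- `G` is AT-free: it has no asteroidal triple. -/
def IsATFree {V : Type*} (G : SimpleGraph V) : Prop :=
  ¬ ∃ x y z : V, x ≠ y ∧ y ≠ z ∧ x ≠ z ∧ ¬G.Adj x y ∧ ¬G.Adj y z ∧ ¬G.Adj x z ∧
    HasAvoidingPath G x y z ∧ HasAvoidingPath G y z x ∧ HasAvoidingPath G x z y

/-- `G` is a threshold graph. -/
def IsThresholdGraph {V : Type*} (G : SimpleGraph V) : Prop :=
  ∃ (w : V → ℝ) (t : ℝ), ∀ u v : V, u ≠ v → (G.Adj u v ↔ t ≤ w u + w v)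

/-- `G` is a chain graph: bipartite with the neighbourhoods of one side linearly ordered
by inclusion. -/
def IsChainGraph {V : Type*} (G : SimpleGraph V) : Prop :=
  ∃ A B : Set V, A ∪ B = Set.univ ∧ Disjoint A B ∧
    (∀ u v : V, G.Adj u v → ¬(u ∈ A ∧ v ∈ A) ∧ ¬(u ∈ B ∧ v ∈ B)) ∧
    ∀ a₁ ∈ A, ∀ a₂ ∈ A,
      G.neighborSet a₁ ⊆ G.neighborSet a₂ ∨ G.neighborSet a₂ ⊆ G.neighborSet a₁

/-- `G` is chordal: it has no induced cycle of length greater than 3. -/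
def IsChordal {V : Type*} (G : SimpleGraph V) : Prop :=
  ∀ n : ℕ, 4 ≤ n → IsEmpty (SimpleGraph.cycleGraph n ↪g G)

/-- A walk with pairwise distinct edge colours yields a path with the same property. -/
theorem rainbow_path_of_walk {V : Type*} (G : SimpleGraph V) (c : Sym2 V → ℕ) {u v : V}
    (p : G.Walk u v) (hp : (p.edges.map c).Nodup) :
    ∃ q : G.Walk u v, q.IsPath ∧ (q.edges.map c).Nodup := by
  classical
  refine ⟨p.bypass, p.bypass_isPath, ?_⟩
  refine List.Nodup.map_on ?_ p.bypass_isPath.isTrail.edges_nodup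
  intro x hx y hy hxy
  exact List.inj_on_of_nodup_map hp (p.edges_bypass_subset_edges hx) (p.edges_bypass_subset_edges hy) hxy

/-- A finite connected graph attains its rainbow connection number. -/
theorem rc_spec {V : Type*} [Finite V] (G : SimpleGraph V) (hG : G.Connected) :
    ∃ c : Sym2 V → ℕ, (∀ e ∈ G.edgeSet, c e < rc G) ∧ RainbowConnectedUnder G c := by
  classical
  have : {n | ∃ c : Sym2 V → ℕ, (∀ e ∈ G.edgeSet, c e < n) ∧
      RainbowConnectedUnder G c}.Nonempty := by
    obtain ⟨n, ⟨e⟩⟩ := Finite.exists_equiv_fin (Sym2 V)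
    refine ⟨n, fun x => (e x : ℕ), fun x _ => (e x).2, fun u v => ?_⟩
    obtain ⟨p⟩ := hG.preconnected u v
    refine ⟨p.bypass, p.bypass_isPath, ?_⟩
    refine List.Nodup.map ?_ p.bypass_isPath.isTrail.edges_nodup
    intro x y hxy
    exact e.injective (Fin.ext hxy)
  exact Nat.sInf_mem this

/-- A maximal independent set in the part of the graph outside `D`. -/
theorem exists_max_indep {V : Type*} [Finite V] (G : SimpleGraph V) (D : Set V) :
    ∃ X : Set V, (∀ x ∈ X, ∀ y ∈ X, ¬ G.Adj x y) ∧
      ∀ v, v ∉ D → v ∉ X → ∃ x ∈ X, x ∉ D ∧ G.Adj v x := by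
  obtain ⟨X, hX⟩ := (Set.toFinite {S : Set V | (∀ x ∈ S, x ∉ D) ∧
    ∀ x ∈ S, ∀ y ∈ S, ¬ G.Adj x y}).exists_maximal ⟨∅, by simp⟩
  refine ⟨X, hX.prop.2, fun v hv hvX => ?_⟩
  by_contra hcon
  push Not at hcon
  refine hvX (hX.le_of_ge (y := insert v X) ⟨?_, ?_⟩ (Set.subset_insert v X) (Set.mem_insert v X))
  · rintro x (rfl | hx)
    · exact hv
    · exact hX.prop.1 x hx
  · rintro x (rfl | hx) y (rfl | hy) h
    · exact G.irrefl h
    · exact hcon y hy (hX.prop.1 y hy) h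
    · exact hcon x hx (hX.prop.1 x hx) h.symm
    · exact hX.prop.2 x hx y hy h

/-- If `D` is a connected two-way dominating set in a finite connected
graph `G`, then `rc(G) ≤ rc(G[D]) + 3`. -/
theorem stmt_0 {V : Type*} [Fintype V] (G : SimpleGraph V) (hG : G.Connected)
    (D : Set V) (hdom : IsDominatingSet G D) (hconn : (G.induce D).Connected)
    (hpen : ∀ v : V, deg G v = 1 → v ∈ D) :
    rc G ≤ rc (G.induce D) + 3 := by
  classical
  obtain ⟨c0, hc0, hr0⟩ := rc_spec (G.induce D) hconn
  set k := rc (G.induce D) with hk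
  obtain ⟨X, hXi, hXm⟩ := exists_max_indep G D
  have hfoot : ∀ v, ∃ a, v ∉ D → a ∈ D ∧ G.Adj v a := by
    intro v
    rcases hdom v with h | ⟨u, hu, huv⟩
    · exact ⟨v, fun h' => absurd h h'⟩
    · exact ⟨u, fun _ => ⟨hu, huv.symm⟩⟩
  choose f hf using hfoot
  let L : Sym2 V → Prop := fun e => ∃ v a, v ∉ D ∧ a ∈ D ∧ v ∈ X ∧
    ((∀ w, G.Adj v w → w ∈ D) → a = f v) ∧ e = s(v, a)
  let fb : Sym2 V → ℕ := fun e => if ∀ x ∈ e, x ∉ D then k + 2 else if L e then k else k + 1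
  let c : Sym2 V → ℕ := Function.extend (Sym2.map (Subtype.val : D → V)) c0 fb
  have hcin : ∀ e : Sym2 D, c (e.map Subtype.val) = c0 e := fun e =>
    (Sym2.map.injective Subtype.val_injective).extend_apply c0 fb e
  have hcout : ∀ x y, x ∉ D → c s(x, y) = fb s(x, y) := by
    intro x y hx
    refine Function.extend_apply' _ _ _ ?_
    rintro ⟨e, he⟩
    have : x ∈ Sym2.map (Subtype.val : D → V) e := by rw [he]; simp
    obtain ⟨z, -, hz⟩ := Sym2.mem_map.1 this
    exact hx (hz ▸ z.2)
  have hcoo : ∀ x y, x ∉ D → y ∉ D → c s(x, y) = k + 2 := by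
    intro x y hx hy
    rw [hcout x y hx]
    simp [fb, hx, hy]
  have hleg : ∀ v a, v ∉ D → a ∈ D →
      c s(v, a) = if v ∈ X ∧ ((∀ w, G.Adj v w → w ∈ D) → a = f v) then k else k + 1 := by
    intro v a hv ha
    rw [hcout v a hv]
    have h1 : ¬ ∀ x ∈ s(v, a), x ∉ D := fun h => h a (by simp) ha
    have h2 : L s(v, a) ↔ (v ∈ X ∧ ((∀ w, G.Adj v w → w ∈ D) → a = f v)) := by
      constructor
      · rintro ⟨v', a', hv', ha', h3, h4, h5⟩
        rcases Sym2.eq_iff.1 h5 with ⟨rfl, rfl⟩ | ⟨rfl, rfl⟩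
        · exact ⟨h3, h4⟩
        · exact absurd ha' hv
      · rintro ⟨h3, h4⟩
        exact ⟨v, a, hv, ha, h3, h4, rfl⟩
    simp only [fb, if_neg h1, h2]
  have hDwalk : ∀ a ∈ D, ∀ b ∈ D, ∃ p : G.Walk a b, (p.edges.map c).Nodup ∧
      ∀ i ∈ p.edges.map c, i < k := by
    intro a ha b hb
    obtain ⟨p, -, hp⟩ := hr0 ⟨a, ha⟩ ⟨b, hb⟩
    have h : (p.map (SimpleGraph.Embedding.induce D).toHom).edges.map c = p.edges.map c0 := by
      rw [SimpleGraph.Walk.edges_map, List.map_map]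
      exact List.map_congr_left fun e _ => hcin e
    have h' : ∀ i ∈ (p.map (SimpleGraph.Embedding.induce D).toHom).edges.map c, i < k := by
      rw [h]
      intro i hi
      obtain ⟨e, he, rfl⟩ := List.mem_map.1 hi
      exact hc0 e (p.edges_subset_edgeSet he)
    exact ⟨p.map (SimpleGraph.Embedding.induce D).toHom, h.symm ▸ hp, h'⟩
  let Acc : V → List ℕ → Prop := fun v l => ∃ a ∈ D, ∃ p : G.Walk v a, p.edges.map c = l
  have acc1 : ∀ v a, v ∉ D → a ∈ D → G.Adj v a → Acc v [c s(v, a)] := by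
    intro v a _ ha h
    exact ⟨a, ha, h.toWalk, by simp⟩
  have acc2 : ∀ v w a, a ∈ D → G.Adj v w → G.Adj w a → Acc v [c s(v, w), c s(w, a)] := by
    intro v w a ha h h'
    exact ⟨a, ha, .cons h h'.toWalk, by simp⟩
  have hXacc : ∀ v, v ∉ D → v ∈ X → Acc v [k] := by
    intro v hv hvX
    have := acc1 v (f v) hv (hf v hv).1 (hf v hv).2
    rwa [hleg v _ hv (hf v hv).1, if_pos ⟨hvX, fun _ => rfl⟩] at this
  have hYacc : ∀ v, v ∉ D → v ∉ X → Acc v [k + 1] := by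
    intro v hv hvX
    have := acc1 v (f v) hv (hf v hv).1 (hf v hv).2
    rwa [hleg v _ hv (hf v hv).1, if_neg (fun h => hvX h.1)] at this
  have hXacc' : ∀ v, v ∉ D → v ∈ X → Acc v [k + 1] ∨ Acc v [k + 2, k + 1] := by
    intro v hv hvX
    by_cases hiso : ∀ w, G.Adj v w → w ∈ D
    · left
      have : ∃ a, G.Adj v a ∧ a ≠ f v := by
        by_contra hcon
        push Not at hcon
        refine hv (hpen v ?_)
        have : G.neighborSet v = {f v} := by
          ext a
          simp only [SimpleGraph.mem_neighborSet, Set.mem_singleton_iff]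
          exact ⟨hcon a, fun h => h ▸ (hf v hv).2⟩
        rw [deg, this, Set.ncard_singleton]
      obtain ⟨a, ha, hne⟩ := this
      have := acc1 v a hv (hiso a ha) ha
      rwa [hleg v a hv (hiso a ha), if_neg (fun h => hne (h.2 hiso))] at this
    · right
      push Not at hiso
      obtain ⟨w, hvw, hw⟩ := hiso
      have hwX : w ∉ X := fun h => hXi v hvX w h hvw
      have := acc2 v w (f w) (hf w hw).1 hvw (hf w hw).2
      rwa [hcoo v w hv hw, hleg w _ hw (hf w hw).1, if_neg (fun h => hwX h.1)] at this
  have hYacc' : ∀ v, v ∉ D → v ∉ X → Acc v [k + 2, k] := by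
    intro v hv hvX
    obtain ⟨w, hwX, hw, hvw⟩ := hXm v hv hvX
    have := acc2 v w (f w) (hf w hw).1 hvw (hf w hw).2
    rwa [hcoo v w hv hw, hleg w _ hw (hf w hw).1, if_pos ⟨hwX, fun _ => rfl⟩] at this
  have key : ∀ u v lu lv, Acc u lu → Acc v lv → (lu ++ lv).Nodup → (∀ i ∈ lu ++ lv, k ≤ i) →
      ∃ p : G.Walk u v, p.IsPath ∧ (p.edges.map c).Nodup := by
    rintro u v lu lv ⟨a, ha, p, rfl⟩ ⟨b, hb, q, rfl⟩ hnd hge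
    obtain ⟨r, hr, hrk⟩ := hDwalk a ha b hb
    refine rainbow_path_of_walk G c ((p.append r).append q.reverse) ?_
    rw [SimpleGraph.Walk.edges_append, SimpleGraph.Walk.edges_append,
      SimpleGraph.Walk.edges_reverse, List.map_append, List.map_append, List.map_reverse]
    generalize p.edges.map c = lp at *
    generalize q.edges.map c = lq at *
    generalize r.edges.map c = lr at *
    rw [List.nodup_append] at hnd
    have h1 : ∀ i ∈ lp, k ≤ i := fun i hi => hge i (List.mem_append_left _ hi)
    have h2 : ∀ i ∈ lq, k ≤ i := fun i hi => hge i (List.mem_append_right _ hi)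
    rw [List.nodup_append, List.nodup_append]
    refine ⟨⟨hnd.1, hr, ?_⟩, List.nodup_reverse.2 hnd.2.1, ?_⟩
    · intro x hx y hy hxy
      have := h1 x hx
      have := hrk y hy
      omega
    · intro x hx y hy
      rw [List.mem_reverse] at hy
      rcases List.mem_append.1 hx with hx | hx
      · exact hnd.2.2 x hx y hy
      · intro hxy
        have := h2 y hy
        have := hrk x hx
        omega
  have accD : ∀ v ∈ D, Acc v [] := fun v hv => ⟨v, hv, .nil, by simp⟩
  refine Nat.sInf_le ⟨c, ?_, ?_⟩
  · intro e he
    by_cases h : ∃ e' : Sym2 D, e'.map Subtype.val = e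
    · obtain ⟨e', rfl⟩ := h
      rw [hcin]
      have : e' ∈ (G.induce D).edgeSet := by
        induction e' with
        | _ x y => simpa using he
      have := hc0 e' this
      omega
    · have : c e = fb e := Function.extend_apply' _ _ _ h
      rw [this]
      simp only [fb]
      split_ifs <;> omega
  · intro u v
    by_cases hu : u ∈ D
    · by_cases hv : v ∈ D
      · exact key u v _ _ (accD u hu) (accD v hv) (by simp) (by simp)
      · by_cases hvX : v ∈ X
        · exact key u v _ _ (accD u hu) (hXacc v hv hvX) (by simp) (by simp)
        · exact key u v _ _ (accD u hu) (hYacc v hv hvX) (by simp) (by simp)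
    · by_cases huX : u ∈ X
      · have h := hXacc u hu huX
        by_cases hv : v ∈ D
        · exact key u v _ _ h (accD v hv) (by simp) (by simp)
        · by_cases hvX : v ∈ X
          · rcases hXacc' v hv hvX with h' | h'
            · exact key u v _ _ h h' (by simp) (by simp)
            · exact key u v _ _ h h' (by simp) (by simp)
          · exact key u v _ _ h (hYacc v hv hvX) (by simp) (by simp)
      · have h := hYacc u hu huX
        by_cases hv : v ∈ D
        · exact key u v _ _ h (accD v hv) (by simp) (by simp)
        · by_cases hvX : v ∈ X
          · exact key u v _ _ h (hXacc v hv hvX) (by simp) (by simp)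
          · exact key u v _ _ h (hYacc' v hv hvX) (by simp) (by simp)
end

section
/- Let G be a finite connected simple graph. Then rc(G) ≤ γ_c(G) + pen(G) + 2, where γ_c(G) is the connected domination number of G and pen(G) is the number of pendant vertices of G. -/
open SimpleGraph Set

/-- A connected finite graph can be rainbow coloured along a spanning tree. -/
lemma tree_colouring {W : Type*} [Fintype W] (H : SimpleGraph W) (hH : H.Connected) :
    ∃ c : Sym2 W → ℕ, (∀ e, c e ≤ Fintype.card W - 2) ∧
      ∀ u v : W, ∃ p : H.Walk u v, (p.edges.map c).Nodup := by
  classical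
  obtain ⟨T, hTH, hT⟩ := hH.exists_isTree_le
  have hcard := hT.card_edgeFinset
  let f := T.edgeFinset.equivFin
  refine ⟨fun e => if h : e ∈ T.edgeFinset then (f ⟨e, h⟩ : ℕ) else 0, ?_, ?_⟩
  · intro e
    dsimp only
    split_ifs with h
    · have := (f ⟨e, h⟩).2
      omega
    · omega
  · intro u v
    obtain ⟨q, hq⟩ := (hT.connected.preconnected u v).exists_isPath
    refine ⟨q.mapLe hTH, ?_⟩
    rw [SimpleGraph.Walk.edges_mapLe_eq_edges]
    refine List.Nodup.map_on ?_ hq.isTrail.edges_nodup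
    intro x hx y hy hxy
    have hx' : x ∈ T.edgeFinset := by simpa using q.edges_subset_edgeSet hx
    have hy' : y ∈ T.edgeFinset := by simpa using q.edges_subset_edgeSet hy
    rw [dif_pos hx', dif_pos hy'] at hxy
    have := f.injective (Fin.ext hxy)
    simpa using this

/-- `v` reaches `D` by a rainbow walk using only colours in `S`. -/
def Acc' {V : Type*} (G : SimpleGraph V) (c : Sym2 V → ℕ) (D : Set V) (S : Set ℕ) (v : V) :
    Prop :=
  ∃ d ∈ D, ∃ p : G.Walk v d, (p.edges.map c).Nodup ∧ ∀ e ∈ p.edges, c e ∈ S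

lemma Acc'.mono {V : Type*} {G : SimpleGraph V} {c : Sym2 V → ℕ} {D : Set V} {S T : Set ℕ}
    {v : V} (h : Acc' G c D S v) (hST : S ⊆ T) : Acc' G c D T v := by
  obtain ⟨d, hd, p, hp, hp'⟩ := h
  exact ⟨d, hd, p, hp, fun e he => hST (hp' e he)⟩

lemma join {V : Type*} {G : SimpleGraph V} {c : Sym2 V → ℕ} {D : Set V} {S T B : Set ℕ}
    (hD : ∀ u ∈ D, ∀ v ∈ D, ∃ p : G.Walk u v, (p.edges.map c).Nodup ∧ ∀ e ∈ p.edges, c e ∈ B)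
    (hST : Disjoint S T) (hSB : Disjoint S B) (hTB : Disjoint T B) {u v : V}
    (hu : Acc' G c D S u) (hv : Acc' G c D T v) :
    ∃ p : G.Walk u v, p.IsPath ∧ (p.edges.map c).Nodup := by
  classical
  obtain ⟨d, hd, p, hp, hp'⟩ := hu
  obtain ⟨d', hd', q, hq, hq'⟩ := hv
  obtain ⟨r, hr, hr'⟩ := hD d hd d' hd'
  let w := p.append (r.append q.reverse)
  have hw : (w.edges.map c).Nodup := by
    simp only [w, SimpleGraph.Walk.edges_append, SimpleGraph.Walk.edges_reverse, List.map_append,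
      List.map_reverse]
    rw [List.nodup_append', List.nodup_append', List.nodup_reverse]
    refine ⟨hp, ⟨hr, hq, ?_⟩, ?_⟩
    · intro a ha hb
      simp only [List.mem_reverse, List.mem_map] at ha hb
      obtain ⟨e, he, rfl⟩ := ha
      obtain ⟨e', he', h⟩ := hb
      exact Set.disjoint_left.1 hTB (h ▸ hq' e' he') (hr' e he)
    · intro a ha hb
      simp only [List.mem_append, List.mem_reverse, List.mem_map] at ha hb
      obtain ⟨e, he, rfl⟩ := ha
      rcases hb with ⟨e', he', h⟩ | ⟨e', he', h⟩
      · exact Set.disjoint_left.1 hSB (hp' e he) (h ▸ hr' e' he')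
      · exact Set.disjoint_left.1 hST (hp' e he) (h ▸ hq' e' he')
  refine ⟨w.bypass, w.bypass_isPath, ?_⟩
  exact hw.sublist ((SimpleGraph.Walk.edges_bypass_sublist_edges w).map c)

lemma main_colouring {V : Type*} [Fintype V] (G : SimpleGraph V) (D : Set V)
    (hdom : IsDominatingSet G D) (hconn : (G.induce D).Connected)
    (hpen : ∀ v, deg G v = 1 → v ∈ D) :
    ∃ c : Sym2 V → ℕ, (∀ e, c e < D.ncard + 2) ∧ RainbowConnectedUnder G c := by
  classical
  obtain ⟨c0, hc0, hr0⟩ := tree_colouring (G.induce D) hconn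
  have hcardD : Fintype.card D = D.ncard := by
    rw [← Nat.card_eq_fintype_card]; rfl
  have hpos : 0 < D.ncard := by
    obtain ⟨x⟩ := hconn.nonempty
    rw [← hcardD]; exact Fintype.card_pos_iff.2 ⟨x⟩
  rw [hcardD] at hc0
  set n := D.ncard with hn
  -- maximal independent set outside `D`
  obtain ⟨X, hX⟩ : ∃ X : Set V, Maximal (fun X : Set V =>
      X ⊆ Dᶜ ∧ ∀ x ∈ X, ∀ y ∈ X, ¬ G.Adj x y) X := by
    obtain ⟨X, -, hX⟩ := (Set.toFinite {X : Set V | X ⊆ Dᶜ ∧ ∀ x ∈ X, ∀ y ∈ X, ¬ G.Adj x y}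
      ).exists_le_maximal (a := ∅) (by simp)
    exact ⟨X, hX⟩
  obtain ⟨⟨hXD, hXi⟩, hXm⟩ := hX
  have hY : ∀ v, v ∉ D → v ∉ X → ∃ x ∈ X, G.Adj v x := by
    intro v hvD hvX
    by_contra! hcon
    apply hvX
    apply hXm (y := insert v X) ⟨?_, ?_⟩ (Set.subset_insert _ _) (Set.mem_insert _ _)
    · intro x hx
      rcases hx with rfl | hx
      · exact hvD
      · exact hXD hx
    · intro x hx y hy hxy
      rcases hx with rfl | hx <;> rcases hy with rfl | hy
      · exact G.loopless.irrefl _ hxy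
      · exact hcon y hy hxy
      · exact hcon x hx hxy.symm
      · exact hXi x hx y hy hxy
  have hf : ∀ v, ∃ d, v ∉ D → d ∈ D ∧ G.Adj v d := by
    intro v
    rcases hdom v with h | ⟨u, hu, h⟩
    · exact ⟨v, fun h' => absurd h h'⟩
    · exact ⟨u, fun _ => ⟨hu, h.symm⟩⟩
  choose f hf using hf
  let R1 : V → V → Prop := fun d v =>
    d ∈ D ∧ v ∉ D ∧ v ∈ X ∧ ((∃ y, y ∉ D ∧ G.Adj v y) ∨ d = f v)
  let c : Sym2 V → ℕ := fun e =>
    if h : ∃ e' : Sym2 D, e'.map Subtype.val = e then c0 h.choose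
    else if ∃ d v, R1 d v ∧ e = s(v, d) then n - 1
    else if ∃ d v, d ∈ D ∧ v ∉ D ∧ e = s(v, d) then n else n + 1
  have hcD : ∀ e' : Sym2 D, c (e'.map Subtype.val) = c0 e' := by
    intro e'
    have h : ∃ e'' : Sym2 D, e''.map Subtype.val = e'.map Subtype.val := ⟨e', rfl⟩
    simp only [c]
    rw [dif_pos h]
    congr 1
    exact Sym2.map.injective Subtype.val_injective h.choose_spec
  have hnot : ∀ v w, v ∉ D → ¬ ∃ e' : Sym2 D, e'.map Subtype.val = s(v, w) := by
    rintro v w hv ⟨e', he'⟩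
    have : v ∈ e'.map Subtype.val := by rw [he']; simp
    rw [Sym2.mem_map] at this
    obtain ⟨a, -, rfl⟩ := this
    exact hv a.2
  have hc1 : ∀ d v, R1 d v → c s(v, d) = n - 1 := by
    intro d v h
    simp only [c]
    rw [dif_neg (hnot v d h.2.1), if_pos ⟨d, v, h, rfl⟩]
  have hc2 : ∀ d v, d ∈ D → v ∉ D → ¬ R1 d v → c s(v, d) = n := by
    intro d v hd hv h
    simp only [c]
    rw [dif_neg (hnot v d hv), if_neg, if_pos ⟨d, v, hd, hv, rfl⟩]
    rintro ⟨d', v', h', he⟩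
    rcases Sym2.eq_iff.1 he with ⟨rfl, rfl⟩ | ⟨rfl, rfl⟩
    · exact h h'
    · exact hv h'.1
  have hc3 : ∀ v w, v ∉ D → w ∉ D → c s(v, w) = n + 1 := by
    intro v w hv hw
    simp only [c]
    rw [dif_neg (hnot v w hv), if_neg, if_neg]
    · rintro ⟨d', v', h', -, he⟩
      rcases Sym2.eq_iff.1 he with ⟨rfl, rfl⟩ | ⟨rfl, rfl⟩
      · exact hw h'
      · exact hv h'
    · rintro ⟨d', v', h', he⟩
      rcases Sym2.eq_iff.1 he with ⟨rfl, rfl⟩ | ⟨rfl, rfl⟩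
      · exact hw h'.1
      · exact hv h'.1
  refine ⟨c, ?_, ?_⟩
  · intro e
    simp only [c]
    split_ifs with h
    · have := hc0 h.choose
      omega
    all_goals omega
  -- walks inside `D`: colours `≤ n - 2`, and edges only exist when `2 ≤ n`
  have hDwalk : ∀ u ∈ D, ∀ v ∈ D, ∃ p : G.Walk u v, (p.edges.map c).Nodup ∧
      ∀ e ∈ p.edges, c e ∈ {k | k < n - 1} := by
    suffices h : ∀ u v : D, ∃ p : G.Walk ((SimpleGraph.Embedding.induce (G := G) D).toHom u)
        ((SimpleGraph.Embedding.induce (G := G) D).toHom v), (p.edges.map c).Nodup ∧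
        ∀ e ∈ p.edges, c e ∈ {k | k < n - 1} from fun u hu v hv => h ⟨u, hu⟩ ⟨v, hv⟩
    intro u v
    obtain ⟨p, hp⟩ := hr0 u v
    refine ⟨p.map (SimpleGraph.Embedding.induce D).toHom, ?_, ?_⟩
    · rw [SimpleGraph.Walk.edges_map, List.map_map]
      have : (c ∘ Sym2.map (SimpleGraph.Embedding.induce (G := G) D).toHom) = c0 := by
        funext e
        exact hcD e
      rw [this]
      exact hp
    · intro e he
      rw [SimpleGraph.Walk.edges_map, List.mem_map] at he
      obtain ⟨e', he', rfl⟩ := he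
      have h1 : c (Sym2.map (SimpleGraph.Embedding.induce (G := G) D).toHom e') = c0 e' := hcD e'
      have h2 := hc0 e'
      have h3 : 2 ≤ n := by
        have := p.edges_subset_edgeSet he'
        induction e' using Sym2.ind with
        | _ a b =>
          have hab : a ≠ b := (SimpleGraph.mem_edgeSet _ |>.1 this).ne
          have := Fintype.one_lt_card_iff.2 ⟨a, b, hab⟩
          omega
      rw [h1, Set.mem_ofPred_eq]
      omega
  have acc0 : ∀ v ∈ D, ∀ S, Acc' G c D S v := by
    intro v hv S
    exact ⟨v, hv, SimpleGraph.Walk.nil, by simp, by simp⟩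
  have acc1 : ∀ v d, d ∈ D → G.Adj v d → Acc' G c D {c s(v, d)} v := by
    intro v d hd h
    exact ⟨d, hd, h.toWalk, by simp, by simp⟩
  have acc2 : ∀ v w d, d ∈ D → G.Adj v w → G.Adj w d → c s(v, w) ≠ c s(w, d) →
      Acc' G c D {c s(w, d), c s(v, w)} v := by
    intro v w d hd h h' hne
    exact ⟨d, hd, SimpleGraph.Walk.cons h h'.toWalk, by simpa using hne, by simp⟩
  have hyacc : ∀ y, y ∉ D → y ∉ X → ∃ d ∈ D, G.Adj y d ∧ c s(y, d) = n := by
    intro y hyD hyX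
    exact ⟨f y, (hf y hyD).1, (hf y hyD).2, hc2 _ _ (hf y hyD).1 hyD (fun h => hyX h.2.2.1)⟩
  have hxacc : ∀ x, x ∈ X → ∃ d ∈ D, G.Adj x d ∧ c s(x, d) = n - 1 := by
    intro x hx
    have hxD := hXD hx
    exact ⟨f x, (hf x hxD).1, (hf x hxD).2, hc1 _ _ ⟨(hf x hxD).1, hxD, hx, Or.inr rfl⟩⟩
  have hall : ∀ v, (Acc' G c D {n - 1} v ∧ Acc' G c D {n, n + 1} v) ∨
      (Acc' G c D {n} v ∧ Acc' G c D {n - 1, n + 1} v) := by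
    intro v
    by_cases hvD : v ∈ D
    · exact Or.inl ⟨acc0 v hvD _, acc0 v hvD _⟩
    by_cases hvX : v ∈ X
    · left
      obtain ⟨d, hd, hvd, hcd⟩ := hxacc v hvX
      refine ⟨hcd ▸ acc1 v d hd hvd, ?_⟩
      by_cases hy : ∃ y, y ∉ D ∧ G.Adj v y
      · obtain ⟨y, hyD, hvy⟩ := hy
        have hyX : y ∉ X := fun h => hXi v hvX y h hvy
        obtain ⟨d', hd', hyd', hcd'⟩ := hyacc y hyD hyX
        have h3 := hc3 v y hvD hyD
        have := acc2 v y d' hd' hvy hyd' (by omega)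
        rwa [h3, hcd'] at this
      · have hfv := hf v hvD
        obtain ⟨d', hd'1, hd'2⟩ : ∃ d', G.Adj v d' ∧ d' ≠ f v := by
          by_contra! hcon
          apply hvD
          apply hpen
          unfold deg
          rw [Set.ncard_eq_one]
          refine ⟨f v, ?_⟩
          ext w
          simp only [SimpleGraph.mem_neighborSet, Set.mem_singleton_iff]
          exact ⟨hcon w, fun h => h ▸ hfv.2⟩
        have hd'D : d' ∈ D := by
          by_contra h
          exact hy ⟨d', h, hd'1⟩
        have h2 : c s(v, d') = n := by
          apply hc2 _ _ hd'D hvD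
          rintro ⟨-, -, -, h | h⟩
          · exact hy h
          · exact hd'2 h
        have := acc1 v d' hd'D hd'1
        rw [h2] at this
        exact this.mono (by simp)
    · right
      obtain ⟨d, hd, hvd, hcd⟩ := hyacc v hvD hvX
      refine ⟨hcd ▸ acc1 v d hd hvd, ?_⟩
      obtain ⟨x, hx, hvx⟩ := hY v hvD hvX
      obtain ⟨d', hd', hxd', hcd'⟩ := hxacc x hx
      have h3 := hc3 v x hvD (hXD hx)
      have := acc2 v x d' hd' hvx hxd' (by omega)
      rwa [h3, hcd'] at this
  have dis : ∀ S T : Set ℕ, (∀ a ∈ S, ∀ b ∈ T, a ≠ b) → Disjoint S T := by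
    intro S T h
    exact Set.disjoint_left.2 fun a ha hb => h a ha a hb rfl
  intro u v
  rcases hall u with ⟨hu, hu'⟩ | ⟨hu, hu'⟩ <;> rcases hall v with ⟨hv, hv'⟩ | ⟨hv, hv'⟩
  · refine join hDwalk (dis _ _ ?_) (dis _ _ ?_) (dis _ _ ?_) hu hv' <;>
      (intro a ha b hb; simp at ha hb; omega)
  · refine join hDwalk (dis _ _ ?_) (dis _ _ ?_) (dis _ _ ?_) hu hv <;>
      (intro a ha b hb; simp at ha hb; omega)
  · refine join hDwalk (dis _ _ ?_) (dis _ _ ?_) (dis _ _ ?_) hu hv <;>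
      (intro a ha b hb; simp at ha hb; omega)
  · refine join hDwalk (dis _ _ ?_) (dis _ _ ?_) (dis _ _ ?_) hu hv' <;>
      (intro a ha b hb; simp at ha hb; omega)

/-- For every finite connected graph `G`,
`rc(G) ≤ γ_c(G) + pen(G) + 2`, where `pen(G)` is the number of pendant vertices. -/
theorem stmt_2 {V : Type*} [Fintype V] (G : SimpleGraph V) (hG : G.Connected) :
    rc G ≤ connDomNum G + ({v : V | deg G v = 1}).ncard + 2 := by
  classical
  have hne : {n | ∃ D : Set V, D.ncard = n ∧ IsDominatingSet G D ∧
      (G.induce D).Connected}.Nonempty := by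
    refine ⟨_, Set.univ, rfl, fun v => Or.inl (Set.mem_univ v), ?_⟩
    exact (SimpleGraph.induceUnivIso G).connected_iff.2 hG
  obtain ⟨D, hDc, hdom, hconn⟩ := Nat.sInf_mem hne
  have hDc : D.ncard = connDomNum G := hDc
  set P : Set V := {v : V | deg G v = 1} with hP
  have hsub : D ⊆ D ∪ P := Set.subset_union_left
  have hconn' : (G.induce (D ∪ P)).Connected := by
    obtain ⟨x0⟩ := hconn.nonempty
    have key : ∀ v : V, ∀ hv : v ∈ D, (G.induce (D ∪ P)).Reachable ⟨v, hsub hv⟩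
        ⟨x0, hsub x0.2⟩ := by
      intro v hv
      exact (hconn.preconnected ⟨v, hv⟩ x0).map (SimpleGraph.induceHomOfLE G hsub).toHom
    have key' : ∀ v : ↥(D ∪ P), (G.induce (D ∪ P)).Reachable v ⟨x0, hsub x0.2⟩ := by
      rintro ⟨v, hv⟩
      rcases hdom v with h | ⟨u, hu, h⟩
      · exact key v h
      · refine SimpleGraph.Reachable.trans (SimpleGraph.Adj.reachable ?_) (key u hu)
        exact h.symm
    have : Nonempty ↥(D ∪ P) := ⟨⟨x0, hsub x0.2⟩⟩
    exact ⟨fun u v => (key' u).trans (key' v).symm⟩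
  have hdom' : IsDominatingSet G (D ∪ P) := by
    intro v
    rcases hdom v with h | ⟨u, hu, h⟩
    · exact Or.inl (hsub h)
    · exact Or.inr ⟨u, hsub hu, h⟩
  obtain ⟨c, hc, hr⟩ := main_colouring G (D ∪ P) hdom' hconn' (fun v hv => Or.inr hv)
  have h1 : rc G ≤ (D ∪ P).ncard + 2 := Nat.sInf_le ⟨c, fun e _ => hc e, hr⟩
  have h2 := Set.ncard_union_le D P
  omega
end

section
/- Let G be a finite connected simple AT-free graph with minimum degree δ(G) ≥ 2. Then diam(G) ≤ rc(G) ≤ diam(G) + 3. -/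
open SimpleGraph Set

/-! ### Avoiding walks and admissible vertices -/

/-- `x` and `y` are joined by a walk inside `S`. -/
def Cn {V : Type*} (G : SimpleGraph V) (S : Set V) (x y : V) : Prop :=
  ∃ p : G.Walk x y, ∀ w ∈ p.support, w ∈ S

/-- The complement of the closed neighbourhood. -/
def Miss {V : Type*} (G : SimpleGraph V) (v : V) : Set V := {w | w ≠ v ∧ ¬ G.Adj v w}

section aux
variable {V : Type*} {G : SimpleGraph V}

lemma Miss.symm {a b : V} (h : a ∈ Miss G b) : b ∈ Miss G a :=
  ⟨h.1.symm, fun h' => h.2 h'.symm⟩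

lemma Cn.mono {S T : Set V} (h : S ⊆ T) {x y : V} : Cn G S x y → Cn G T x y := by
  rintro ⟨p, hp⟩
  exact ⟨p, fun w hw => h (hp w hw)⟩

lemma Cn.symm {S : Set V} {x y : V} : Cn G S x y → Cn G S y x := by
  rintro ⟨p, hp⟩
  exact ⟨p.reverse, fun w hw => hp w (by simpa using hw)⟩

lemma Cn.trans {S : Set V} {x y z : V} : Cn G S x y → Cn G S y z → Cn G S x z := by
  rintro ⟨p, hp⟩ ⟨q, hq⟩
  refine ⟨p.append q, fun w hw => ?_⟩
  rw [Walk.mem_support_append_iff] at hw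
  exact hw.elim (hp w) (hq w)

lemma Cn.refl {S : Set V} {x : V} (h : x ∈ S) : Cn G S x x :=
  ⟨Walk.nil, fun w hw => by simp at hw; exact hw ▸ h⟩

lemma Cn.adj {S : Set V} {x y : V} (hx : x ∈ S) (hy : y ∈ S) (h : G.Adj x y) : Cn G S x y :=
  ⟨h.toWalk, fun w hw => by
    simp at hw
    rcases hw with rfl | rfl <;> assumption⟩

lemma Cn.left {S : Set V} {x y : V} : Cn G S x y → x ∈ S := by
  rintro ⟨p, hp⟩
  exact hp _ p.start_mem_support

lemma Cn.right {S : Set V} {x y : V} : Cn G S x y → y ∈ S := by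
  rintro ⟨p, hp⟩
  exact hp _ p.end_mem_support

lemma Cn.mem_support {S : Set V} {x y : V} (p : G.Walk x y) (hp : ∀ w ∈ p.support, w ∈ S) :
    ∀ w ∈ p.support, Cn G S x w := by
  classical
  intro w hw
  exact ⟨p.takeUntil w hw, fun t ht => hp t (p.support_takeUntil_subset_support hw ht)⟩

lemma Cn.comp {S : Set V} {x y : V} (h : Cn G S x y) : Cn G {w | Cn G S x w} x y := by
  obtain ⟨p, hp⟩ := h
  exact ⟨p, Cn.mem_support p hp⟩

lemma Cn.avoiding {x y z : V} (h : Cn G (Miss G z) x y) : HasAvoidingPath G x y z := by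
  classical
  obtain ⟨p, hp⟩ := h
  exact ⟨p.bypass, p.bypass_isPath, fun w hw => hp w (p.support_bypass_subset_support hw)⟩

lemma IsATFree.elim (hat : IsATFree G) {u v z : V} (h1 : Cn G (Miss G v) u z)
    (h2 : Cn G (Miss G u) v z) (h3 : Cn G (Miss G z) u v) : False := by
  refine hat ⟨u, v, z, h1.left.1, h3.right.1, h3.left.1, fun h => h1.left.2 h.symm,
    fun h => h3.right.2 h.symm, fun h => h3.left.2 h.symm, h3.avoiding, h2.avoiding, h1.avoiding⟩

/-- A walk that starts in `R2` and can never leave it stays there. -/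
lemma walk_stays {T R2 : Set V} (h : ∀ a ∈ R2, ∀ b ∈ T, G.Adj a b → b ∈ R2) {x y : V}
    (p : G.Walk x y) (hp : ∀ w ∈ p.support, w ∈ T) (hx : x ∈ R2) : ∀ w ∈ p.support, w ∈ R2 := by
  induction p with
  | nil => intro w hw; simp at hw; exact hw ▸ hx
  | cons hadj q ih =>
    intro w hw
    rw [Walk.support_cons, List.mem_cons] at hw
    rcases hw with rfl | hw
    · exact hx
    · have hq : ∀ w ∈ q.support, w ∈ T := fun w hw => hp w (by simp [hw])
      exact ih hq (h _ hx _ (hq _ q.start_mem_support) hadj) w hw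

/-- Existence of an admissible vertex, relative to `A ⊆ R`. -/
lemma admissible [Finite V] (hat : IsATFree G) : ∀ n : ℕ, ∀ R A : Set V, R.ncard = n → A ⊆ R →
    A.Nonempty → ∃ z ∈ A, ∀ u ∈ A, ∀ v ∈ A, Cn G (R ∩ Miss G v) u z →
      Cn G (R ∩ Miss G u) v z → False := by
  intro n
  induction n using Nat.strong_induction_on with
  | _ n ih =>
  intro R A hn hAR hA
  by_cases hex : ∃ z ∈ A, ∃ c ∈ R, c ∈ Miss G z
  swap
  · obtain ⟨z, hz⟩ := hA
    refine ⟨z, hz, fun u hu v hv h1 _ => hex ⟨z, hz, v, hAR hv, ?_⟩⟩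
    exact Miss.symm h1.right.2
  obtain ⟨⟨z, c⟩, ⟨hz, hcR, hcz⟩, hmax⟩ := Set.exists_max_image
    {q : V × V | q.1 ∈ A ∧ q.2 ∈ R ∧ q.2 ∈ Miss G q.1}
    (fun q => {w | Cn G (R ∩ Miss G q.1) q.2 w}.ncard) (Set.toFinite _)
    (by obtain ⟨z, hz, c, hc, hcz⟩ := hex; exact ⟨(z, c), hz, hc, hcz⟩)
  simp only at hz hcR hcz hmax
  set C : Set V := {w | Cn G (R ∩ Miss G z) c w} with hC
  have hcC : c ∈ C := Cn.refl ⟨hcR, hcz⟩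
  have hCR : C ⊆ R := fun w hw => (Cn.right hw).1
  have hCz : C ⊆ Miss G z := fun w hw => (Cn.right hw).2
  have hCc : ∀ w ∈ C, Cn G C c w := fun w hw => Cn.comp hw
  have star : ∀ a ∈ A, C ⊆ Miss G a → ∀ s, s ∉ C → Cn G (R ∩ Miss G a) c s → False := by
    intro a ha hCa s hs hcs
    have h1 := hmax (a, c) ⟨ha, hcR, hCa hcC⟩
    simp only at h1
    have h2 : C ⊂ {w | Cn G (R ∩ Miss G a) c w} := by
      refine ⟨fun w hw => (hCc w hw).mono (T := R ∩ Miss G a) fun t ht => ⟨hCR ht, hCa ht⟩, fun h => hs (h hcs)⟩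
    have := Set.ncard_lt_ncard h2 (Set.toFinite _)
    omega
  set S : Set V := {s | s ∈ R ∧ s ∉ C ∧ ∃ w ∈ C, G.Adj w s} with hS
  have hmiss : ∀ a ∈ R, a ∉ C → a ∉ S → C ⊆ Miss G a := by
    intro a haR haC haS w hw
    exact ⟨fun h => haC (h ▸ hw), fun h => haS ⟨haR, haC, w, hw, h.symm⟩⟩
  have hSadj : ∀ a ∈ A, C ⊆ Miss G a → ∀ s ∈ S, G.Adj a s := by
    rintro a ha hCa s ⟨hsR, hsC, w, hw, hws⟩
    by_contra hna
    have hsa : s ∈ Miss G a := ⟨fun h => (hCa hw).2 (h ▸ hws.symm), hna⟩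
    refine star a ha hCa s hsC (Cn.trans ((hCc w hw).mono (T := R ∩ Miss G a) fun t ht => ⟨hCR ht, hCa ht⟩) ?_)
    exact Cn.adj ⟨hCR hw, hCa hw⟩ ⟨hsR, hsa⟩ hws
  have hzC : z ∉ C := fun h => (hCz h).1 rfl
  have hzS : z ∉ S := by
    rintro ⟨-, -, w, hw, hwz⟩
    exact (hCz hw).2 hwz.symm
  set R2 : Set V := {a | a ∈ R ∧ a ∉ C ∧ a ∉ S} with hR2
  have hlt : R2.ncard < n := by
    rw [← hn]
    exact Set.ncard_lt_ncard (s := R2) (t := R) ⟨fun a ha => ha.1, fun h => (h hcR).2.1 hcC⟩ (Set.toFinite _)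
  obtain ⟨z2, ⟨hz2A, hz2R⟩, hz2⟩ := ih _ hlt R2 (A ∩ R2) rfl (fun a ha => ha.2)
    ⟨z, hz, hAR hz, hzC, hzS⟩
  have hCz2 : C ⊆ Miss G z2 := hmiss z2 hz2R.1 hz2R.2.1 hz2R.2.2
  refine ⟨z2, hz2A, ?_⟩
  have notS : ∀ u ∈ A, u ∈ Miss G z2 → u ∉ S := fun u hu hm hs =>
    hm.2 (hSadj z2 hz2A hCz2 u hs)
  have notC : ∀ u ∈ A, ∀ v ∈ A, Cn G (R ∩ Miss G v) u z2 →
      Cn G (R ∩ Miss G u) v z2 → u ∉ C := by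
    intro u hu v hv h1 h2 huC
    have hvC : v ∉ C := by
      intro hvC
      refine hat.elim (h1.mono Set.inter_subset_right) (h2.mono Set.inter_subset_right) ?_
      exact ((hCc u huC).symm.trans (hCc v hvC)).mono hCz2
    have hCv := hmiss v (hAR hv) hvC (notS v hv (Miss.symm h1.right.2))
    exact star v hv hCv z2 hz2R.2.1
      (((hCc u huC).mono (T := R ∩ Miss G v) fun t ht => ⟨hCR ht, hCv ht⟩).trans h1)
  intro u hu v hv h1 h2
  have huC := notC u hu v hv h1 h2
  have hvC := notC v hv u hu h2 h1
  have huS := notS u hu (Miss.symm h2.right.2)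
  have hvS := notS v hv (Miss.symm h1.right.2)
  have stay : ∀ u v, u ∈ A → v ∈ A → u ∉ C → u ∉ S → v ∉ C → v ∉ S →
      Cn G (R ∩ Miss G v) u z2 → Cn G (R2 ∩ Miss G v) u z2 := by
    rintro u v hu hv huC huS hvC hvS ⟨p, hp⟩
    refine ⟨p, fun w hw => ⟨walk_stays (T := R ∩ Miss G v) (R2 := R2) ?_ p hp ⟨hAR hu, huC, huS⟩ w hw,
      (hp w hw).2⟩⟩
    intro a ha b hb hab
    refine ⟨hb.1, fun hbC => ha.2.2 ⟨ha.1, ha.2.1, b, hbC, hab.symm⟩, fun hbS => ?_⟩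
    exact hb.2.2 (hSadj v hv (hmiss v (hAR hv) hvC hvS) b hbS)
  exact hz2 u ⟨hu, hAR hu, huC, huS⟩ v ⟨hv, hAR hv, hvC, hvS⟩
    (stay u v hu hv huC huS hvC hvS h1) (stay v u hv hu hvC hvS huC huS h2)

/-- A connected AT-free graph has a dominating geodesic. -/
lemma exists_dominating_geodesic [Finite V] (hG : G.Connected) (hat : IsATFree G) :
    ∃ (x y : V) (p : G.Walk x y), p.IsPath ∧ p.length = G.dist x y ∧
      ∀ v, ∃ d ∈ p.support, d = v ∨ G.Adj v d := by
  obtain ⟨x0⟩ := hG.nonempty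
  obtain ⟨x, -, hx⟩ := admissible hat _ Set.univ Set.univ rfl (Set.Subset.refl _) ⟨x0, trivial⟩
  simp only [Set.mem_univ, true_imp_iff, Set.univ_inter] at hx
  have hw : ∀ y, ∃ p : G.Walk x y, p.length = G.dist x y := fun y =>
    hG.exists_walk_length_eq_dist x y
  choose P hP using hw
  let N : V → Set V := fun y => {v | ∃ d ∈ (P y).support, d = v ∨ G.Adj v d}
  obtain ⟨y, -, hy⟩ := Set.exists_max_image Set.univ (fun y => (N y).ncard) (Set.toFinite _)
    ⟨x0, trivial⟩
  refine ⟨x, y, P y, (P y).isPath_of_length_eq_dist (hP y), hP y, ?_⟩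
  intro v
  by_contra hv
  have hvN : v ∉ N y := hv
  have hPv : ∀ w ∈ (P y).support, w ∈ Miss G v := fun w hw =>
    ⟨fun h => hv ⟨w, hw, Or.inl h⟩, fun h => hv ⟨w, hw, Or.inr h⟩⟩
  have hvv : v ∈ N v := ⟨v, (P v).end_mem_support, Or.inl rfl⟩
  have hsub : N y ⊆ N v := by
    rintro u ⟨d, hd, hdu⟩
    by_contra hu
    have h1 : Cn G (Miss G u) v x := by
      refine Cn.symm ⟨P v, fun w hw => ⟨fun h => hu ⟨w, hw, Or.inl h⟩, fun h => ?_⟩⟩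
      exact hu ⟨w, hw, Or.inr h⟩
    have huv : u ∈ Miss G v := Miss.symm h1.left
    refine hx u v ?_ h1
    have h2 : Cn G (Miss G v) d x := (Cn.mem_support (P y) hPv d hd).symm
    rcases hdu with rfl | hdu
    · exact h2
    · exact (Cn.adj huv (hPv d hd) hdu).trans h2
  have := Set.ncard_lt_ncard (s := N y) (t := N v) ⟨hsub, fun h => hvN (h hvv)⟩ (Set.toFinite _)
  have := hy v trivial
  omega

/-! ### Rainbow colouring -/

/-- Rainbow walk. -/
def RW (G : SimpleGraph V) (c : Sym2 V → ℕ) (u v : V) : Prop :=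
  ∃ p : G.Walk u v, (p.edges.map c).Nodup

lemma RW.path {c : Sym2 V → ℕ} {u v : V} (h : RW G c u v) :
    ∃ p : G.Walk u v, p.IsPath ∧ (p.edges.map c).Nodup := by
  classical
  obtain ⟨p, hp⟩ := h
  refine ⟨p.bypass, p.bypass_isPath, List.Nodup.map_on ?_ p.bypass_isPath.isTrail.edges_nodup⟩
  intro a ha b hb hab
  exact List.inj_on_of_nodup_map hp (p.edges_bypass_subset_edges ha) (p.edges_bypass_subset_edges hb) hab

lemma RW.symm {c : Sym2 V → ℕ} {u v : V} (h : RW G c u v) : RW G c v u := by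
  obtain ⟨p, hp⟩ := h
  refine ⟨p.reverse, ?_⟩
  rw [Walk.edges_reverse, List.map_reverse]
  exact List.nodup_reverse.2 hp

/-- The legs of the vertices outside `D` can be two-coloured suitably. -/
lemma exists_legs [Finite V] (hδ : ∀ v : V, 2 ≤ deg G v) (D : Set V)
    (hD : ∀ v, v ∉ D → ∃ d ∈ D, G.Adj v d) :
    ∃ T : V → V → Prop, ∀ v, v ∉ D →
      ((∃ d ∈ D, G.Adj v d ∧ T v d) ∧ ((∃ d ∈ D, G.Adj v d ∧ ¬ T v d) ∨
        ∃ w, w ∉ D ∧ G.Adj v w ∧ ∃ d ∈ D, G.Adj w d ∧ ¬ T w d)) ∨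
      ((∃ d ∈ D, G.Adj v d ∧ ¬ T v d) ∧ ((∃ d ∈ D, G.Adj v d ∧ T v d) ∨
        ∃ w, w ∉ D ∧ G.Adj v w ∧ ∃ d ∈ D, G.Adj w d ∧ T w d)) := by
  classical
  -- a maximal independent set among the vertices outside `D`
  obtain ⟨A, hA, hmax⟩ := Set.exists_max_image
    {A : Set V | (∀ a ∈ A, a ∉ D) ∧ ∀ a ∈ A, ∀ b ∈ A, ¬ G.Adj a b} Set.ncard (Set.toFinite _)
    ⟨∅, by simp⟩
  have hdom : ∀ v, v ∉ D → v ∉ A → ∃ a ∈ A, G.Adj v a := by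
    intro v hv hvA
    by_contra hno
    push Not at hno
    have h1 := hmax (insert v A) (by
      refine ⟨?_, ?_⟩
      · rintro a (rfl | ha)
        · exact hv
        · exact hA.1 a ha
      · rintro a (rfl | ha) b (rfl | hb)
        · exact G.loopless.irrefl _
        · exact hno b hb
        · exact fun h => hno a ha h.symm
        · exact hA.2 a ha b hb)
    have h2 := Set.ncard_insert_of_notMem hvA (Set.toFinite _)
    omega
  choose! f hfD hf using hD
  refine ⟨fun v d => if ∃ w, w ∉ D ∧ G.Adj v w then v ∈ A else d = f v, ?_⟩
  intro v hv
  by_cases hw : ∃ w, w ∉ D ∧ G.Adj v w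
  · by_cases hvA : v ∈ A
    · left
      obtain ⟨w, hwD, hvw⟩ := hw
      refine ⟨⟨f v, hfD v hv, hf v hv, ?_⟩, Or.inr ⟨w, hwD, hvw, f w, hfD w hwD, hf w hwD, ?_⟩⟩
      · beta_reduce; rw [if_pos ⟨w, hwD, hvw⟩]; exact hvA
      · beta_reduce; rw [if_pos ⟨v, hv, hvw.symm⟩]; exact fun h => hA.2 v hvA w h hvw
    · right
      obtain ⟨a, ha, hva⟩ := hdom v hv hvA
      have haD := hA.1 a ha
      refine ⟨⟨f v, hfD v hv, hf v hv, ?_⟩, Or.inr ⟨a, haD, hva, f a, hfD a haD, hf a haD, ?_⟩⟩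
      · beta_reduce; rw [if_pos hw]; exact hvA
      · beta_reduce; rw [if_pos ⟨v, hv, hva.symm⟩]; exact ha
  · left
    refine ⟨⟨f v, hfD v hv, hf v hv, by beta_reduce; rw [if_neg hw]⟩, Or.inl ?_⟩
    obtain ⟨b, hb, hbf⟩ := Set.exists_ne_of_one_lt_ncard (hδ v) (f v)
    refine ⟨b, ?_, hb, by beta_reduce; rw [if_neg hw]; exact hbf⟩
    by_contra hbD
    exact hw ⟨b, hbD, hb⟩

/-- Colouring from a dominating path. -/
lemma exists_coloring [Finite V] (hδ : ∀ v : V, 2 ≤ deg G v) {x y : V} (P : G.Walk x y)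
    (hP : P.IsPath) (hdom : ∀ v, ∃ d ∈ P.support, d = v ∨ G.Adj v d) :
    ∃ c : Sym2 V → ℕ, (∀ e, c e < P.length + 3) ∧ RainbowConnectedUnder G c := by
  classical
  set D : Set V := {d | d ∈ P.support} with hDdef
  have hD : ∀ v, v ∉ D → ∃ d ∈ D, G.Adj v d := by
    intro v hv
    obtain ⟨d, hd, rfl | h⟩ := hdom v
    · exact absurd hd hv
    · exact ⟨d, hd, h⟩
  obtain ⟨T, hT⟩ := exists_legs hδ D hD
  set k := P.length with hk
  let c : Sym2 V → ℕ := fun e => if e ∈ P.edges then P.edges.idxOf e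
    else if ∃ v d, v ∉ D ∧ d ∈ D ∧ T v d ∧ e = s(v, d) then k
    else if ∃ v d, v ∉ D ∧ d ∈ D ∧ e = s(v, d) then k + 1 else k + 2
  have c0 : ∀ e ∈ P.edges, c e = P.edges.idxOf e := fun e he => by simp only [c, if_pos he]
  have c0lt : ∀ e ∈ P.edges, c e < k := fun e he => by
    rw [c0 e he, hk, ← Walk.length_edges]
    exact List.idxOf_lt_length_of_mem he
  have nE : ∀ v w, v ∉ D → s(v, w) ∉ P.edges := fun v w hv h =>
    hv (P.fst_mem_support_of_mem_edges h)
  have c1 : ∀ v d, v ∉ D → d ∈ D → T v d → c s(v, d) = k := by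
    intro v d hv hd ht
    simp only [c]
    rw [if_neg (nE v d hv), if_pos ⟨v, d, hv, hd, ht, rfl⟩]
  have c2 : ∀ v d, v ∉ D → d ∈ D → ¬ T v d → c s(v, d) = k + 1 := by
    intro v d hv hd ht
    simp only [c]
    rw [if_neg (nE v d hv), if_neg, if_pos ⟨v, d, hv, hd, rfl⟩]
    rintro ⟨v', d', hv', hd', ht', he⟩
    rcases Sym2.eq_iff.1 he with ⟨rfl, rfl⟩ | ⟨rfl, rfl⟩
    · exact ht ht'
    · exact hv hd'
  have c3 : ∀ v w, v ∉ D → w ∉ D → c s(v, w) = k + 2 := by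
    intro v w hv hw
    simp only [c]
    rw [if_neg (nE v w hv), if_neg, if_neg]
    · rintro ⟨v', d', hv', hd', he⟩
      rcases Sym2.eq_iff.1 he with ⟨rfl, rfl⟩ | ⟨rfl, rfl⟩ <;> contradiction
    · rintro ⟨v', d', hv', hd', ht', he⟩
      rcases Sym2.eq_iff.1 he with ⟨rfl, rfl⟩ | ⟨rfl, rfl⟩ <;> contradiction
  -- walks within the path
  have core : ∀ d ∈ D, ∀ d' ∈ D, ∃ p : G.Walk d d', (p.edges.map c).Nodup ∧
      ∀ a ∈ p.edges.map c, a < k := by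
    intro d hd d' hd'
    let q := (P.takeUntil d hd).reverse.append (P.takeUntil d' hd')
    have hq : ∀ e ∈ q.bypass.edges, e ∈ P.edges := by
      intro e he
      have he := q.edges_bypass_subset_edges he
      simp only [q, Walk.edges_append, Walk.edges_reverse, List.mem_append,
        List.mem_reverse] at he
      rcases he with he | he
      · exact P.edges_takeUntil_subset_edges hd he
      · exact P.edges_takeUntil_subset_edges hd' he
    refine ⟨q.bypass, List.Nodup.map_on ?_ q.bypass_isPath.isTrail.edges_nodup, ?_⟩
    · intro a ha b hb hab
      rw [c0 a (hq a ha), c0 b (hq b hb)] at hab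
      exact (List.idxOf_inj (hq a ha)).1 hab
    · intro a ha
      obtain ⟨e, he, rfl⟩ := List.mem_map.1 ha
      exact c0lt e (hq e he)
  have hlt : ∀ e, c e < k + 3 := by
    intro e
    by_cases he : e ∈ P.edges
    · have := c0lt e he
      omega
    · simp only [c]
      beta_reduce; rw [if_neg he]
      split_ifs <;> omega
  -- one leg
  have leg : ∀ u ∉ D, ∀ v ∈ D, RW G c u v := by
    intro u hu v hv
    obtain ⟨d, hd, hud⟩ := hD u hu
    obtain ⟨p, hp, hpk⟩ := core d hd v hv
    refine ⟨Walk.cons hud p, ?_⟩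
    rw [Walk.edges_cons, List.map_cons, List.nodup_cons]
    refine ⟨fun h => ?_, hp⟩
    have h1 := hpk _ h
    by_cases ht : T u d
    · rw [c1 u d hu hd ht] at h1; omega
    · rw [c2 u d hu hd ht] at h1; omega
  -- two legs with different colours
  have two : ∀ u ∉ D, ∀ v ∉ D, (∃ d ∈ D, G.Adj u d ∧ T u d) → (∃ d ∈ D, G.Adj v d ∧ ¬ T v d) →
      ∃ p : G.Walk u v, (p.edges.map c).Nodup ∧ ∀ a ∈ p.edges.map c, a < k + 2 := by
    rintro u hu v hv ⟨d, hd, hud, hT1⟩ ⟨d', hd', hvd, hT2⟩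
    obtain ⟨p, hp, hpk⟩ := core d hd d' hd'
    have e1 := c1 u d hu hd hT1
    have e2 : c s(d', v) = k + 1 := by rw [Sym2.eq_swap]; exact c2 v d' hv hd' hT2
    refine ⟨Walk.cons hud (p.concat hvd.symm), ?_, ?_⟩
    · rw [Walk.edges_cons, Walk.edges_concat, List.map_cons, List.concat_eq_append,
        List.map_append, List.nodup_cons, List.nodup_append]
      simp only [List.map_cons, List.map_nil, List.mem_append, List.mem_singleton, e1, e2]
      refine ⟨?_, hp, by simp, ?_⟩
      · rintro (h | h)
        · have := hpk _ h; omega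
        · omega
      · intro a ha b hb
        have := hpk _ ha
        omega
    · intro a ha
      rw [Walk.edges_cons, Walk.edges_concat, List.map_cons, List.concat_eq_append,
        List.map_append] at ha
      simp only [List.map_cons, List.map_nil, List.mem_append, List.mem_cons, e1, e2,
        List.not_mem_nil, or_false] at ha
      rcases ha with h | h | h
      · omega
      · have := hpk _ h; omega
      · omega
  have two' : ∀ u ∉ D, ∀ v ∉ D, (∃ d ∈ D, G.Adj u d ∧ ¬ T u d) → (∃ d ∈ D, G.Adj v d ∧ T v d) →
      ∃ p : G.Walk u v, (p.edges.map c).Nodup ∧ ∀ a ∈ p.edges.map c, a < k + 2 := by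
    intro u hu v hv h1 h2
    obtain ⟨p, hp, hpk⟩ := two v hv u hu h2 h1
    refine ⟨p.reverse, ?_, ?_⟩
    · rw [Walk.edges_reverse, List.map_reverse]
      exact List.nodup_reverse.2 hp
    · rw [Walk.edges_reverse, List.map_reverse]
      simpa using hpk
  have ext : ∀ u w v, u ∉ D → w ∉ D → G.Adj u w →
      (∃ p : G.Walk w v, (p.edges.map c).Nodup ∧ ∀ a ∈ p.edges.map c, a < k + 2) →
      RW G c u v := by
    rintro u w v hu hw huw ⟨p, hp, hpk⟩
    refine ⟨Walk.cons huw p, ?_⟩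
    rw [Walk.edges_cons, List.map_cons, List.nodup_cons]
    refine ⟨fun h => ?_, hp⟩
    have h1 := hpk _ h
    rw [c3 u w hu hw] at h1
    omega
  refine ⟨c, hlt, fun u v => RW.path ?_⟩
  by_cases hu : u ∈ D
  · by_cases hv : v ∈ D
    · obtain ⟨p, hp, -⟩ := core u hu v hv
      exact ⟨p, hp⟩
    · exact (leg v hv u hu).symm
  by_cases hv : v ∈ D
  · exact leg u hu v hv
  have fin : (∃ p : G.Walk u v, (p.edges.map c).Nodup ∧ ∀ a ∈ p.edges.map c, a < k + 2) →
      RW G c u v := fun ⟨p, hp, _⟩ => ⟨p, hp⟩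
  rcases hT u hu with ⟨hu1, hu2⟩ | ⟨hu2, hu1⟩
  · rcases hT v hv with ⟨hv1, -⟩ | ⟨hv2, -⟩
    · rcases hu2 with hu2 | ⟨w, hw, huw, hw2⟩
      · exact fin (two' u hu v hv hu2 hv1)
      · exact ext u w v hu hw huw (two' w hw v hv hw2 hv1)
    · exact fin (two u hu v hv hu1 hv2)
  · rcases hT v hv with ⟨hv1, -⟩ | ⟨hv2, -⟩
    · exact fin (two' u hu v hv hu2 hv1)
    · rcases hu1 with hu1 | ⟨w, hw, huw, hw1⟩
      · exact fin (two u hu v hv hu1 hv2)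
      · exact ext u w v hu hw huw (two w hw v hv hw1 hv2)

end aux

/-- For a finite connected AT-free graph `G` with minimum degree at
least 2, `diam(G) ≤ rc(G) ≤ diam(G) + 3`. -/
theorem stmt_4 {V : Type*} [Fintype V] (G : SimpleGraph V) (hG : G.Connected)
    (hat : IsATFree G) (hδ : ∀ v : V, 2 ≤ deg G v) :
    graphDiam G ≤ rc G ∧ rc G ≤ graphDiam G + 3 := by
  obtain ⟨x, y, P, hP, hlen, hdom⟩ := exists_dominating_geodesic hG hat
  obtain ⟨c, hc, hrc⟩ := exists_coloring hδ P hP hdom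
  have hmem : P.length + 3 ∈
      {n | ∃ c : Sym2 V → ℕ, (∀ e ∈ G.edgeSet, c e < n) ∧ RainbowConnectedUnder G c} :=
    ⟨c, fun e _ => hc e, hrc⟩
  have hdist : G.dist x y ≤ graphDiam G :=
    le_csSup (Set.finite_range fun p : V × V => G.dist p.1 p.2).bddAbove ⟨(x, y), rfl⟩
  refine ⟨?_, ?_⟩
  · obtain ⟨c', hc', hr⟩ := Nat.sInf_mem ⟨_, hmem⟩
    refine csSup_le ⟨_, (x, y), rfl⟩ ?_
    rintro _ ⟨⟨u, v⟩, rfl⟩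
    obtain ⟨p, -, hp⟩ := hr u v
    refine (SimpleGraph.dist_le p).trans ?_
    have hsub : (p.edges.map c').toFinset ⊆ Finset.range (rc G) := by
      intro a ha
      obtain ⟨e, he, rfl⟩ := List.mem_map.1 (List.mem_toFinset.1 ha)
      exact Finset.mem_range.2 (hc' e (p.edges_subset_edgeSet he))
    have := Finset.card_le_card hsub
    rw [List.toFinset_card_of_nodup hp, List.length_map, Walk.length_edges,
      Finset.card_range] at this
    exact this
  · have : rc G ≤ P.length + 3 := Nat.sInf_le hmem
    omega
end

section
/- Let G be a finite connected simple threshold graph with minimum degree δ(G) ≥ 2. Then diam(G) ≤ rc(G) ≤ 3. -/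
open SimpleGraph Set

/-- For a finite connected threshold graph `G` with minimum degree at
least 2, `diam(G) ≤ rc(G) ≤ 3`. -/
theorem stmt_5 {V : Type*} [Fintype V] (G : SimpleGraph V) (hG : G.Connected)
    (hth : IsThresholdGraph G) (hδ : ∀ v : V, 2 ≤ deg G v) :
    graphDiam G ≤ rc G ∧ rc G ≤ 3 := by
  classical
  obtain ⟨w, t, hw⟩ := hth
  have hne : Nonempty V := hG.nonempty
  -- a vertex of maximum weight, and one of maximum weight among the others
  obtain ⟨a, ha⟩ := Finite.exists_max w
  have nbr : ∀ v x : V, ∃ y, G.Adj v y ∧ y ≠ x := by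
    intro v x
    have h2 : 1 < (G.neighborSet v).ncard := hδ v
    obtain ⟨y, hy, hyx⟩ := Set.exists_ne_of_one_lt_ncard h2 x
    exact ⟨y, hy, hyx⟩
  obtain ⟨y₀, -, hy₀⟩ := nbr a a
  obtain ⟨b, hb, hbmax⟩ := Finset.exists_max_image (Finset.univ.erase a) w
    ⟨y₀, by simp [hy₀]⟩
  have hba : b ≠ a := by simpa using hb
  have hbmax' : ∀ x, x ≠ a → w x ≤ w b := fun x hx => hbmax x (by simp [hx])
  have hA : ∀ v, v ≠ a → G.Adj v a := by
    intro v hv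
    obtain ⟨y, hy, -⟩ := nbr v a
    have := (hw v y hy.ne).1 hy
    exact (hw v a hv).2 (by linarith [ha y])
  have hB : ∀ v, v ≠ b → G.Adj v b := by
    intro v hv
    by_cases hva : v = a
    · subst hva
      exact (hA b hba).symm
    obtain ⟨y, hy, hya⟩ := nbr v a
    have := (hw v y hy.ne).1 hy
    exact (hw v b hv).2 (by linarith [hbmax' y hya])
  have h3 : 3 ∈ {n | ∃ c : Sym2 V → ℕ, (∀ e ∈ G.edgeSet, c e < n) ∧
      RainbowConnectedUnder G c} := by
    refine ⟨fun e => if e = s(a, b) then 2 else if a ∈ e then 0 else if b ∈ e then 1 else 2,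
      ?_, ?_⟩
    · intro e _
      dsimp only
      split_ifs <;> norm_num
    · intro u v
      by_cases huv : u = v
      · subst huv
        exact ⟨Walk.nil, by simp, by simp⟩
      by_cases hadj : G.Adj u v
      · exact ⟨Walk.cons hadj Walk.nil, by simp [huv], by simp⟩
      have hua : u ≠ a := by
        rintro rfl
        exact hadj (hA v (Ne.symm huv)).symm
      have hub : u ≠ b := by
        rintro rfl
        exact hadj (hB v (Ne.symm huv)).symm
      have hva : v ≠ a := by
        rintro rfl
        exact hadj (hA u huv)
      have hvb : v ≠ b := by
        rintro rfl
        exact hadj (hB u huv)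
      refine ⟨Walk.cons (hA u hua) (Walk.cons (hA b hba).symm
        (Walk.cons (hB v hvb).symm Walk.nil)), ?_, ?_⟩
      · simp [Walk.isPath_def, hua, hub, huv, hba.symm, hva.symm, hvb.symm]
      · simp [hua, hub, hva, hvb, hba, hba.symm, hva.symm, hvb.symm]
  refine ⟨?_, Nat.sInf_le h3⟩
  obtain ⟨c, hc, hr⟩ := Nat.sInf_mem ⟨3, h3⟩
  refine csSup_le (Set.range_nonempty _) ?_
  rintro _ ⟨⟨u, v⟩, rfl⟩
  obtain ⟨p, -, hp⟩ := hr u v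
  refine (dist_le p).trans ?_
  have hsub : (p.edges.map c).toFinset ⊆ Finset.range (rc G) := by
    intro k hk
    simp only [List.mem_toFinset, List.mem_map] at hk
    obtain ⟨e, he, rfl⟩ := hk
    exact Finset.mem_range.2 (hc e (p.edges_subset_edgeSet he))
  have hcard := Finset.card_le_card hsub
  rw [List.toFinset_card_of_nodup hp] at hcard
  simpa using hcard
end

section
/- Let G be a finite connected simple circular arc graph with minimum degree δ(G) ≥ 2. Then diam(G) ≤ rc(G) ≤ diam(G) + 4. -/
open SimpleGraph Set

/-- a walk with prescribed colours towards `D` -/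
def RExit {V : Type*} (G : SimpleGraph V) (c : Sym2 V → ℕ) (D : Set V) (S : Set ℕ) (u : V) : Prop :=
  ∃ d ∈ D, ∃ w : G.Walk u d, (w.edges.map c).Nodup ∧ ∀ e ∈ w.edges, c e ∈ S

theorem core_lemma {V : Type*} [Fintype V] (G : SimpleGraph V) (hδ : ∀ v : V, 2 ≤ deg G v)
    (D : Set V) (hdom : ∀ v, ∃ d ∈ D, d = v ∨ G.Adj d v) (K : ℕ) (c0 : Sym2 V → ℕ)
    (hc0 : ∀ e, c0 e < K)
    (hD : ∀ u ∈ D, ∀ v ∈ D, ∃ w : G.Walk u v, (w.edges.map c0).Nodup ∧ ∀ x ∈ w.support, x ∈ D) :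
    ∃ c : Sym2 V → ℕ, (∀ e ∈ G.edgeSet, c e < K + 3) ∧ RainbowConnectedUnder G c := by
  classical
  -- maximal independent set outside D
  obtain ⟨I, hI⟩ : ∃ I : Set V, Maximal (fun I : Set V => I ⊆ Dᶜ ∧ ∀ x ∈ I, ∀ y ∈ I, ¬ G.Adj x y) I :=
    Set.Finite.exists_maximal (Set.toFinite {I : Set V | I ⊆ Dᶜ ∧ ∀ x ∈ I, ∀ y ∈ I, ¬ G.Adj x y})
      ⟨∅, Set.empty_subset _, fun x hx => absurd hx (Set.notMem_empty x)⟩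
  choose p hpD hp using hdom
  let iso : V → Prop := fun v => ∀ w, G.Adj v w → w ∈ D
  let A : V → V → Prop := fun v d => if iso v then d = p v else v ∈ I
  let c : Sym2 V → ℕ := fun e =>
    if ∀ x ∈ e, x ∈ D then c0 e else if ∀ x ∈ e, x ∉ D then K + 2
    else if ∃ v d, e = s(v, d) ∧ v ∉ D ∧ d ∈ D ∧ A v d then K else K + 1
  have cD : ∀ x y, x ∈ D → y ∈ D → c s(x, y) = c0 s(x, y) := by
    intro x y hx hy
    simp [c, hx, hy]
  have cO : ∀ x y, x ∉ D → y ∉ D → c s(x, y) = K + 2 := by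
    intro x y hx hy
    simp [c, hx, hy]
  have cM : ∀ x y, x ∉ D → y ∈ D → c s(x, y) = if A x y then K else K + 1 := by
    intro x y hx hy
    have : (∃ v d, s(x, y) = s(v, d) ∧ v ∉ D ∧ d ∈ D ∧ A v d) ↔ A x y := by
      constructor
      · rintro ⟨v, d, he, hv, hd, hA⟩
        rcases Sym2.eq_iff.1 he with ⟨rfl, rfl⟩ | ⟨rfl, rfl⟩
        · exact hA
        · exact absurd hd hx
      · intro h
        exact ⟨x, y, rfl, hx, hy, h⟩
    simp only [c, this]
    simp [hx, hy]
  have mono : ∀ S T u, S ⊆ T → RExit G c D S u → RExit G c D T u := by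
    rintro S T u hST ⟨d, hd, w, h1, h2⟩
    exact ⟨d, hd, w, h1, fun e he => hST (h2 e he)⟩
  have exD : ∀ u ∈ D, ∀ S, RExit G c D S u := fun u hu S => ⟨u, hu, .nil, by simp, by simp⟩
  have ex1 : ∀ u d, u ∉ D → d ∈ D → G.Adj u d → RExit G c D {c s(u, d)} u := fun u d hu hd h =>
    ⟨d, hd, .cons h .nil, by simp, by simp⟩
  have padj : ∀ u, u ∉ D → G.Adj u (p u) := by
    intro u hu
    rcases hp u with h | h
    · exact absurd (h ▸ hpD u) hu
    · exact h.symm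
  have ex2 : ∀ u v d, u ∉ D → v ∉ D → d ∈ D → G.Adj u v → G.Adj v d →
      RExit G c D {c s(v, d), K + 2} u := by
    intro u v d hu hv hd h h'
    refine ⟨d, hd, .cons h (.cons h' .nil), ?_, ?_⟩
    · simp only [Walk.edges_cons, Walk.edges_nil, List.map_cons, List.map_nil]
      rw [cO u v hu hv, cM v d hv hd]
      split_ifs <;> simp
    · simp [cO u v hu hv]
  have key : ∀ u, (RExit G c D {K} u ∧ RExit G c D {K + 1, K + 2} u) ∨
      (RExit G c D {K + 1} u ∧ RExit G c D {K, K + 2} u) := by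
    intro u
    by_cases hu : u ∈ D
    · exact .inl ⟨exD u hu _, exD u hu _⟩
    by_cases hiso : iso u
    · left
      constructor
      · have := ex1 u (p u) hu (hpD u) (padj u hu)
        rw [cM _ _ hu (hpD u)] at this
        simpa [A, hiso] using this
      · have h2 := hδ u
        obtain ⟨q, hq, hne⟩ := Set.exists_ne_of_one_lt_ncard (s := G.neighborSet u) (by unfold deg at h2; omega) (p u)
        have hq' : G.Adj u q := hq
        have := ex1 u q hu (hiso q hq') hq'
        rw [cM _ _ hu (hiso q hq')] at this
        simp only [A, hiso, if_true, hne, if_false] at this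
        exact mono _ _ _ (by simp) this
    · have hnotiso : ∀ x y, G.Adj x y → y ∉ D → ¬ iso x := fun x y h hy hi => hy (hi y h)
      have hiso' := hiso
      simp only [iso, not_forall] at hiso
      obtain ⟨w, huw, hwD⟩ := hiso
      have e1 := ex1 u (p u) hu (hpD u) (padj u hu)
      rw [cM _ _ hu (hpD u)] at e1
      by_cases huI : u ∈ I
      · left
        have hwI : w ∉ I := fun h => hI.prop.2 u huI w h huw
        have e2 := ex2 u w (p w) hu hwD (hpD w) huw (padj w hwD)
        rw [cM _ _ hwD (hpD w)] at e2
        simp only [A, hiso', hnotiso w u huw.symm hu, if_false, huI, hwI, if_true] at e1 e2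
        exact ⟨e1, e2⟩
      · right
        obtain ⟨x, hxI, hux⟩ : ∃ x ∈ I, G.Adj u x := by
          by_contra hcon
          push Not at hcon
          have : insert u I ⊆ I := hI.le_of_ge (y := insert u I) ⟨by
            intro z hz
            rcases hz with rfl | hz
            · exact hu
            · exact hI.prop.1 hz, by
            rintro y (rfl | hy) z (rfl | hz)
            · exact G.loopless.irrefl _
            · exact hcon z hz
            · exact fun h => hcon y hy h.symm
            · exact hI.prop.2 y hy z hz⟩ (Set.subset_insert _ _)
          exact huI (this (Set.mem_insert _ _))
        have hxD : x ∉ D := hI.prop.1 hxI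
        have e2 := ex2 u x (p x) hu hxD (hpD x) hux (padj x hxD)
        rw [cM _ _ hxD (hpD x)] at e2
        simp only [A, hiso', hnotiso x u hux.symm hu, if_false, huI, hxI, if_true] at e1 e2
        exact ⟨e1, e2⟩
  have comb : ∀ u v S T, RExit G c D S u → RExit G c D T v → Disjoint S T →
      (∀ s ∈ S, K ≤ s) → (∀ s ∈ T, K ≤ s) →
      ∃ q : G.Walk u v, q.IsPath ∧ (q.edges.map c).Nodup := by
    rintro u v S T ⟨d, hd, w, hw, hwS⟩ ⟨d', hd', w', hw', hwT⟩ hST hS hT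
    obtain ⟨m, hm, hmD⟩ := hD d hd d' hd'
    have hmc : m.edges.map c = m.edges.map c0 := by
      apply List.map_congr_left
      intro e he
      induction e with
      | h x y => exact cD x y (hmD _ (m.fst_mem_support_of_mem_edges he)) (hmD _ (m.snd_mem_support_of_mem_edges he))
    have hmK : ∀ e ∈ m.edges.map c, e < K := by
      rw [hmc]
      intro e he
      obtain ⟨e', -, rfl⟩ := List.mem_map.1 he
      exact hc0 _
    have hnod : (((w.append m).append w'.reverse).edges.map c).Nodup := by
      simp only [Walk.edges_append, Walk.edges_reverse, List.map_append, List.map_reverse]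
      have h1 : ∀ s ∈ w.edges.map c, s ∈ S := by
        intro s hs
        obtain ⟨e', he, rfl⟩ := List.mem_map.1 hs
        exact hwS _ he
      have h2 : ∀ s ∈ w'.edges.map c, s ∈ T := by
        intro s hs
        obtain ⟨e', he, rfl⟩ := List.mem_map.1 hs
        exact hwT _ he
      refine List.Nodup.append (List.Nodup.append hw (hmc ▸ hm) ?_) (List.nodup_reverse.2 hw') ?_
      · intro s hs hs'
        have := hS s (h1 s hs)
        have := hmK s hs'
        omega
      · intro s hs hs'
        have hsT := h2 s (List.mem_reverse.1 hs')
        rcases List.mem_append.1 hs with hs | hs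
        · exact Set.disjoint_left.1 hST (h1 s hs) hsT
        · have := hT s hsT
          have := hmK s hs
          omega
    refine ⟨((w.append m).append w'.reverse).bypass, Walk.bypass_isPath _, ?_⟩
    refine List.Nodup.map_on ?_ (Walk.bypass_isPath _).isTrail.edges_nodup
    intro e he e' he' h
    exact List.inj_on_of_nodup_map hnod (Walk.edges_bypass_subset_edges _ he)
      (Walk.edges_bypass_subset_edges _ he') h
  refine ⟨c, ?_, ?_⟩
  · intro e _
    have := hc0 e
    simp only [c]
    split_ifs <;> omega
  · intro u v
    rcases key u with ⟨h1, h2⟩ | ⟨h1, h2⟩ <;> rcases key v with ⟨h3, h4⟩ | ⟨h3, h4⟩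
    · exact comb u v _ _ h1 h4 (by simp) (by simp) (by simp)
    · exact comb u v _ _ h1 h3 (by simp) (by simp) (by simp)
    · exact comb u v _ _ h1 h3 (by simp) (by simp) (by simp)
    · exact comb u v _ _ h1 h4 (by simp) (by simp) (by simp)

theorem path_lemma {V : Type*} [Fintype V] (G : SimpleGraph V) (hδ : ∀ v : V, 2 ≤ deg G v)
    {x y : V} (p : G.Walk x y) (hdom : ∀ v, ∃ d ∈ p.support, d = v ∨ G.Adj d v) (K : ℕ)
    (hK : 1 ≤ K) (hpK : p.length ≤ K) :
    ∃ c : Sym2 V → ℕ, (∀ e ∈ G.edgeSet, c e < K + 3) ∧ RainbowConnectedUnder G c := by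
  classical
  refine core_lemma G hδ {v | v ∈ p.support} hdom K
    (fun e => if e ∈ p.edges then p.edges.idxOf e else 0) ?_ ?_
  · intro e
    split_ifs with h
    · have := List.idxOf_lt_length_of_mem h
      rw [Walk.length_edges] at this
      omega
    · omega
  · intro u hu v hv
    let w := ((p.takeUntil u hu).reverse.append (p.takeUntil v hv)).bypass
    have hsub : ∀ e ∈ w.edges, e ∈ p.edges := by
      intro e he
      have := Walk.edges_bypass_subset_edges _ he
      simp only [Walk.edges_append, Walk.edges_reverse, List.mem_append, List.mem_reverse] at this
      rcases this with h | h
      · exact p.edges_takeUntil_subset_edges hu h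
      · exact p.edges_takeUntil_subset_edges hv h
    refine ⟨w, ?_, ?_⟩
    · refine List.Nodup.map_on ?_ (Walk.bypass_isPath _).isTrail.edges_nodup
      intro e he e' he' h
      simp only [hsub e he, hsub e' he', if_true] at h
      exact (List.idxOf_inj (hsub e he)).1 h
    · intro z hz
      have := Walk.support_bypass_subset_support _ hz
      simp only [Walk.mem_support_append_iff, Walk.support_reverse, List.mem_reverse] at this
      rcases this with h | h
      · exact p.support_takeUntil_subset_support hu h
      · exact p.support_takeUntil_subset_support hv h

theorem chain_walk {V : Type*} (G : SimpleGraph V) (f : ℕ → V) (k : ℕ)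
    (hadj : ∀ i < k, G.Adj (f i) (f (i + 1))) (n : ℕ) : ∀ i j : ℕ, i + n = j → j ≤ k →
    ∃ w : G.Walk (f i) (f j), w.length = n ∧
      w.edges = (List.range' i n).map (fun t => s(f t, f (t + 1))) ∧
      ∀ x ∈ w.support, ∃ t ≤ k, f t = x := by
  induction n with
  | zero =>
    rintro i j rfl hj
    exact ⟨.nil, by simp, by simp, by simp only [Walk.support_nil, List.mem_singleton, forall_eq]; exact ⟨i, hj, rfl⟩⟩
  | succ n ih =>
    intro i j hij hj
    obtain ⟨w, h0, h1, h2⟩ := ih (i + 1) j (by omega) hj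
    refine ⟨.cons (hadj i (by omega)) w, by simp [h0], ?_, ?_⟩
    · simp [h1, List.range'_succ]
    · intro x hx
      rw [Walk.support_cons, List.mem_cons] at hx
      rcases hx with rfl | hx
      · exact ⟨i, by omega, rfl⟩
      · exact h2 x hx

theorem cycle_lemma {V : Type*} [Fintype V] (G : SimpleGraph V) (hδ : ∀ v : V, 2 ≤ deg G v)
    (f : ℕ → V) (k K : ℕ) (hk : 3 ≤ k) (hkK : k ≤ 2 * K)
    (hadj : ∀ i < k, G.Adj (f i) (f (i + 1))) (hf : f k = f 0)
    (hinj : ∀ i j, i < j → j < k → f i ≠ f j)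
    (hdom : ∀ v, ∃ t ≤ k, f t = v ∨ G.Adj (f t) v) :
    ∃ c : Sym2 V → ℕ, (∀ e ∈ G.edgeSet, c e < K + 3) ∧ RainbowConnectedUnder G c := by
  classical
  have inj : ∀ i j, i < k → j < k → f i = f j → i = j := by
    intro i j hi hj h
    rcases lt_trichotomy i j with h' | h' | h'
    · exact absurd h (hinj i j h' hj)
    · exact h'
    · exact absurd h.symm (hinj j i h' hi)
  have inj' : ∀ i j, i < k → j < k → f i = f (j + 1) → i = j + 1 ∨ (i = 0 ∧ j + 1 = k) := by
    intro i j hi hj h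
    by_cases h' : j + 1 = k
    · rw [h', hf] at h
      exact .inr ⟨inj i 0 hi (by omega) h, h'⟩
    · exact .inl (inj i (j + 1) hi (by omega) h)
  have einj : ∀ i j, i < k → j < k → s(f i, f (i + 1)) = s(f j, f (j + 1)) → i = j := by
    intro i j hi hj h
    rcases Sym2.eq_iff.1 h with ⟨h1, h2⟩ | ⟨h1, h2⟩
    · exact inj i j hi hj h1
    · have := inj' i j hi hj h1
      have := inj' j i hj hi h2.symm
      omega
  let c0 : Sym2 V → ℕ := fun e =>
    if h : ∃ t < k, e = s(f t, f (t + 1)) then h.choose % K else 0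
  have hc0 : ∀ t < k, c0 s(f t, f (t + 1)) = t % K := by
    intro t ht
    have h : ∃ t' < k, s(f t, f (t + 1)) = s(f t', f (t' + 1)) := ⟨t, ht, rfl⟩
    have : c0 s(f t, f (t + 1)) = h.choose % K := dif_pos h
    rw [this, ← einj t h.choose ht h.choose_spec.1 h.choose_spec.2]
  have main : ∀ i j, i ≤ j → j < k → ∃ w : G.Walk (f i) (f j), (w.edges.map c0).Nodup ∧
      ∀ x ∈ w.support, ∃ t ≤ k, f t = x := by
    intro i j hij hj
    by_cases hle : j - i ≤ K
    · obtain ⟨w, -, h1, h2⟩ := chain_walk G f k hadj (j - i) i j (by omega) hj.le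
      refine ⟨w, ?_, h2⟩
      rw [h1, List.map_map]
      refine List.Nodup.map_on ?_ List.nodup_range'
      intro x hx y hy h
      rw [List.mem_range'_1] at hx hy
      simp only [Function.comp] at h
      rw [hc0 x (by omega), hc0 y (by omega)] at h
      rcases le_total x y with hxy | hxy
      · have := (Nat.modEq_iff_dvd' hxy).1 h
        have := Nat.eq_zero_of_dvd_of_lt this (by omega)
        omega
      · have := (Nat.modEq_iff_dvd' hxy).1 h.symm
        have := Nat.eq_zero_of_dvd_of_lt this (by omega)
        omega
    · obtain ⟨w, -, h1, h2⟩ := chain_walk G f k hadj i 0 i (by omega) (by omega)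
      obtain ⟨w', -, h1', h2'⟩ := chain_walk G f k hadj (k - j) j k (by omega) le_rfl
      refine ⟨((w'.copy rfl hf).append w).reverse, ?_, ?_⟩
      · rw [Walk.edges_reverse, List.map_reverse, List.nodup_reverse, Walk.edges_append,
          Walk.edges_copy, h1, h1', ← List.map_append, List.map_map]
        refine List.Nodup.map_on ?_ (List.Nodup.append List.nodup_range' List.nodup_range' ?_)
        · intro x hx y hy h
          rw [List.mem_append, List.mem_range'_1, List.mem_range'_1] at hx hy
          simp only [Function.comp] at h
          rw [hc0 x (by omega), hc0 y (by omega)] at h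
          have hm : ∀ z, (j ≤ z ∧ z < j + (k - j) ∨ 0 ≤ z ∧ z < 0 + i) →
              (j ≤ z ∧ z % K = z - K) ∨ (z < i ∧ z % K = z) := by
            intro z hz
            rcases hz with hz | hz
            · left
              refine ⟨hz.1, ?_⟩
              rw [Nat.mod_eq_sub_mod (by omega), Nat.mod_eq_of_lt (by omega)]
            · right
              exact ⟨by omega, Nat.mod_eq_of_lt (by omega)⟩
          have := hm x hx
          have := hm y hy
          omega
        · intro x hx hy
          rw [List.mem_range'_1] at hx hy
          omega
      · intro x hx
        simp only [Walk.support_reverse, List.mem_reverse, Walk.mem_support_append_iff,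
          Walk.support_copy] at hx
        rcases hx with hx | hx
        · exact h2' x hx
        · exact h2 x hx
  have norm : ∀ x, (∃ t ≤ k, f t = x) → ∃ t < k, f t = x := by
    rintro x ⟨t, ht, rfl⟩
    by_cases h : t = k
    · exact ⟨0, by omega, by rw [h, hf]⟩
    · exact ⟨t, by omega, rfl⟩
  refine core_lemma G hδ {x | ∃ t ≤ k, f t = x} ?_ K c0 ?_ ?_
  · intro v
    obtain ⟨t, ht, h⟩ := hdom v
    exact ⟨f t, ⟨t, ht, rfl⟩, h⟩
  · intro e
    simp only [c0]
    split_ifs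
    · exact Nat.mod_lt _ (by omega)
    · omega
  · intro u hu v hv
    obtain ⟨i, hi, rfl⟩ := norm u hu
    obtain ⟨j, hj, rfl⟩ := norm v hv
    rcases le_total i j with h | h
    · exact main i j h hj
    · obtain ⟨w, h1, h2⟩ := main j i h hi
      refine ⟨w.reverse, ?_, ?_⟩
      · rw [Walk.edges_reverse, List.map_reverse, List.nodup_reverse]
        exact h1
      · intro x hx
        exact h2 x (by simpa using hx)

theorem cross_lemma {W : Type*} (H : SimpleGraph W) (A B : W → ℝ) (hAB : ∀ x, A x ≤ B x)
    (hadj : ∀ x y, H.Adj x y → A x ≤ B y) (α β : ℝ) (hαβ : α ≤ β) {x y : W}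
    (p : H.Walk x y) : A x ≤ β → α ≤ A y → ∃ d ∈ p.support, A d ≤ β ∧ α ≤ B d := by
  induction p with
  | nil => intro h1 h2; exact ⟨_, by simp, h1, h2.trans (hAB _)⟩
  | @cons u v w h p ih =>
    intro h1 h2
    by_cases h3 : α ≤ B u
    · exact ⟨u, by simp, h1, h3⟩
    · have hβ : A v ≤ β := by
        have := hadj v u h.symm
        linarith
      obtain ⟨d, hd, h4⟩ := ih hβ h2
      exact ⟨d, by simp [hd], h4⟩

/-- The periodic interval graph covering a circular arc graph. -/
def liftGraph {V : Type*} (a b : V → ℝ) : SimpleGraph (V × ℤ) where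
  Adj x y := x.1 ≠ y.1 ∧ a x.1 + x.2 ≤ b y.1 + y.2 ∧ a y.1 + y.2 ≤ b x.1 + x.2
  symm := ⟨fun _ _ h => ⟨h.1.symm, h.2.2, h.2.1⟩⟩
  loopless := ⟨fun _ h => h.1 rfl⟩

theorem lift_walk {V : Type*} (G : SimpleGraph V) (a b : V → ℝ)
    (hGa : ∀ u v, G.Adj u v ↔ u ≠ v ∧ ∃ n : ℤ, a u ≤ b v + n ∧ a v + n ≤ b u)
    {u v : V} (p : G.Walk u v) : ∀ n : ℤ, ∃ m : ℤ, ∃ q : (liftGraph a b).Walk (u, n) (v, m),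
      q.length = p.length := by
  induction p with
  | nil => intro n; exact ⟨n, .nil, rfl⟩
  | cons h p ih =>
    intro n
    obtain ⟨hne, t, h1, h2⟩ := (hGa _ _).1 h
    obtain ⟨m, q, hq⟩ := ih (n + t)
    have hH : (liftGraph a b).Adj (_, n) (_, n + t) :=
      ⟨hne, by push_cast; linarith, by push_cast; linarith⟩
    exact ⟨m, .cons hH q, by rw [Walk.length_cons, Walk.length_cons, hq]⟩

theorem meets_adj {V : Type*} (G : SimpleGraph V) (a b : V → ℝ)
    (hGa : ∀ u v, G.Adj u v ↔ u ≠ v ∧ ∃ n : ℤ, a u ≤ b v + n ∧ a v + n ≤ b u)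
    (u v : V) (m n : ℤ) (h1 : a u + m ≤ b v + n) (h2 : a v + n ≤ b u + m) :
    u = v ∨ G.Adj u v := by
  by_cases h : u = v
  · exact .inl h
  · refine .inr ((hGa u v).2 ⟨h, n - m, ?_, ?_⟩) <;> push_cast <;> linarith

theorem dist_le_graphDiam {V : Type*} [Fintype V] (G : SimpleGraph V) (u v : V) :
    G.dist u v ≤ graphDiam G :=
  le_csSup (Set.finite_range _).bddAbove ⟨(u, v), rfl⟩

theorem upper {V : Type*} [Fintype V] (G : SimpleGraph V) (hG : G.Connected)
    (a b : V → ℝ) (hab : ∀ v, a v ≤ b v)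
    (hGa : ∀ u v, G.Adj u v ↔ u ≠ v ∧ ∃ n : ℤ, a u ≤ b v + n ∧ a v + n ≤ b u)
    (hδ : ∀ v : V, 2 ≤ deg G v) :
    ∃ c : Sym2 V → ℕ, (∀ e ∈ G.edgeSet, c e < graphDiam G + 1 + 3) ∧
      RainbowConnectedUnder G c := by
  classical
  by_cases hw : ∃ k, ∃ v m M, m < M ∧ ∃ q : (liftGraph a b).Walk (v, m) (v, M), q.length = k
  · obtain ⟨v, m, M, hmM, q, hq⟩ := Nat.find_spec hw
    have hmin : ∀ (v : V) (m M : ℤ) (q : (liftGraph a b).Walk (v, m) (v, M)), m ≠ M →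
        Nat.find hw ≤ q.length := by
      intro v m M q hne
      rcases lt_or_gt_of_ne hne with h | h
      · exact Nat.find_min' hw ⟨v, m, M, h, q, rfl⟩
      · exact Nat.find_min' hw ⟨v, M, m, h, q.reverse, by simp⟩
    generalize Nat.find hw = k at hq hmin
    let g : ℕ → V × ℤ := q.getVert
    have hg0 : g 0 = (v, m) := q.getVert_zero
    have hgk : g k = (v, M) := by rw [← hq]; exact q.getVert_length
    have hgadj : ∀ i < k, (liftGraph a b).Adj (g i) (g (i + 1)) := fun i hi =>
      q.adj_getVert_succ (by omega)
    let f : ℕ → V := fun i => (g i).1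
    have hfadj : ∀ i < k, G.Adj (f i) (f (i + 1)) := by
      intro i hi
      obtain ⟨h1, h2, h3⟩ := hgadj i hi
      exact (meets_adj G a b hGa _ _ _ _ h2 h3).resolve_left h1
    have hfk : f k = f 0 := by simp only [f, hg0, hgk]
    have hiso : ∀ i j, i ≤ j → j ≤ k → ∀ r : G.Walk (f i) (f j),
        j - i ≤ r.length ∨ k ≤ r.length + (j - i) := by
      intro i j hij hj r
      obtain ⟨N, r', hr'⟩ := lift_walk G a b hGa r (g i).2
      by_cases hN : N = (g j).2
      · left
        subst hN
        obtain ⟨w1, hw1, -⟩ := chain_walk _ g k hgadj i 0 i (by omega) (by omega)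
        obtain ⟨w2, hw2, -⟩ := chain_walk _ g k hgadj (k - j) j k (by omega) le_rfl
        have := hmin v m M (((w1.append r').append w2).copy hg0 hgk) hmM.ne
        simp only [Walk.length_copy, Walk.length_append] at this
        have e : Walk.length r' = r.length := hr'
        omega
      · right
        obtain ⟨w1, hw1, -⟩ := chain_walk _ g k hgadj (j - i) i j (by omega) hj
        have := hmin (f j) (g j).2 N (w1.reverse.append r') (Ne.symm hN)
        simp only [Walk.length_append, Walk.length_reverse] at this
        have e : Walk.length r' = r.length := hr'
        omega
    have hhalf : k / 2 ≤ graphDiam G := by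
      obtain ⟨r, hr⟩ := hG.exists_walk_length_eq_dist (f 0) (f (k / 2))
      have := dist_le_graphDiam G (f 0) (f (k / 2))
      have := hiso 0 (k / 2) (by omega) (by omega) r
      omega
    have hcross : ∀ z, ∃ d ∈ q.support, d.1 = z ∨ G.Adj d.1 z := by
      intro z
      obtain ⟨d, hd, h1, h2⟩ := cross_lemma (liftGraph a b) (fun x => a x.1 + x.2)
        (fun x => b x.1 + x.2) (fun x => by have := hab x.1; simpa using this)
        (fun x y h => h.2.1) (a z + ⌈a v + m - b z⌉) (b z + ⌈a v + m - b z⌉)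
        (by have := hab z; linarith) q
        (by have := Int.le_ceil (a v + m - b z); simp only; linarith)
        (by
          have h1 := Int.ceil_lt_add_one (a v + m - b z)
          have h2 : (m : ℝ) + 1 ≤ M := by exact_mod_cast hmM
          have h3 := hab z
          simp only
          linarith)
      exact ⟨d, hd, meets_adj G a b hGa _ _ _ _ h1 h2⟩
    by_cases hk : 3 ≤ k
    · refine cycle_lemma G hδ f k _ hk (by omega) hfadj hfk ?_ ?_
      · intro i j hij hj h
        have := hiso i j hij.le hj.le (Walk.nil.copy rfl h)
        simp only [Walk.length_copy, Walk.length_nil] at this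
        omega
      · intro z
        obtain ⟨d, hd, h⟩ := hcross z
        obtain ⟨t, rfl, ht⟩ := Walk.mem_support_iff_exists_getVert.1 hd
        exact ⟨t, by omega, h⟩
    · let φ : liftGraph a b →g G := ⟨Prod.fst, fun {x y} h =>
        (meets_adj G a b hGa _ _ _ _ h.2.1 h.2.2).resolve_left h.1⟩
      refine path_lemma G hδ (q.map φ) ?_ _ (by omega) ?_
      · intro z
        obtain ⟨d, hd, h⟩ := hcross z
        exact ⟨d.1, by rw [Walk.support_map]; exact List.mem_map.2 ⟨d, hd, rfl⟩, h⟩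
      · rw [Walk.length_map]
        omega
  · obtain ⟨v0⟩ := hG.nonempty
    have hex : ∀ v, ∃ n : ℤ, (liftGraph a b).Reachable (v0, 0) (v, n) := by
      intro v
      obtain ⟨r⟩ := hG.preconnected v0 v
      obtain ⟨n, q, -⟩ := lift_walk G a b hGa r 0
      exact ⟨n, ⟨q⟩⟩
    choose n hn using hex
    have huniq : ∀ v N, (liftGraph a b).Reachable (v0, 0) (v, N) → N = n v := by
      intro v N hN
      by_contra hne
      obtain ⟨q⟩ := hN.symm.trans (hn v)
      rcases lt_or_gt_of_ne hne with h | h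
      · exact hw ⟨_, v, _, _, h, q, rfl⟩
      · exact hw ⟨_, v, _, _, h, q.reverse, rfl⟩
    have hadj : ∀ u v, G.Adj u v → a u + n u ≤ b v + n v := by
      intro u v h
      obtain ⟨hne, t, h1, h2⟩ := (hGa _ _).1 h
      have hH : (liftGraph a b).Adj (u, n u) (v, n u + t) := by
        refine ⟨hne, ?_, ?_⟩ <;> push_cast <;> linarith
      rw [← huniq v _ ((hn u).trans hH.reachable)]
      exact hH.2.1
    have := hG.nonempty
    obtain ⟨u, hu⟩ := Finite.exists_min (fun v => b v + n v)
    obtain ⟨w, hw⟩ := Finite.exists_max (fun v => a v + n v)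
    obtain ⟨r, hr⟩ := hG.exists_walk_length_eq_dist u w
    have := dist_le_graphDiam G u w
    refine path_lemma G hδ r ?_ _ (by omega) (by omega)
    intro z
    obtain ⟨d, hd, h1, h2⟩ := cross_lemma G (fun v => a v + n v) (fun v => b v + n v)
      (fun x => by have := hab x; simpa using this) hadj (a z + n z) (b z + n z)
      (by have := hab z; linarith) r
      (by have h1 := hu z; have h2 := hab u; linarith) (hw z)
    exact ⟨d, hd, meets_adj G a b hGa _ _ _ _ h1 h2⟩

theorem arc_iff (a b a' b' : ℝ) :
    (((fun x : ℝ => (x : AddCircle (1:ℝ))) '' Set.Icc a b) ∩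
        ((fun x : ℝ => (x : AddCircle (1:ℝ))) '' Set.Icc a' b')).Nonempty ↔
      a ≤ b ∧ a' ≤ b' ∧ ∃ n : ℤ, a ≤ b' + n ∧ a' + n ≤ b := by
  constructor
  · rintro ⟨_, ⟨x, hx, rfl⟩, ⟨y, hy, h⟩⟩
    refine ⟨hx.1.trans hx.2, hy.1.trans hy.2, ?_⟩
    have h0 : ((y - x : ℝ) : AddCircle (1:ℝ)) = 0 := by
      rw [AddCircle.coe_sub]
      exact sub_eq_zero.2 h
    obtain ⟨n, hn⟩ := (AddCircle.coe_eq_zero_iff (1:ℝ)).1 h0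
    have hn' : (n : ℝ) = y - x := by simpa using hn
    obtain ⟨hx1, hx2⟩ := hx
    obtain ⟨hy1, hy2⟩ := hy
    refine ⟨-n, ?_, ?_⟩ <;> push_cast <;> linarith
  · rintro ⟨h1, h2, n, h3, h4⟩
    refine ⟨((max a (a' + n) : ℝ) : AddCircle (1:ℝ)), ⟨_, ⟨le_max_left _ _, max_le h1 h4⟩, rfl⟩,
      max a (a' + n) - n, ⟨?_, ?_⟩, ?_⟩
    · have := le_max_right a (a' + n)
      linarith
    · have : max a (a' + n) ≤ b' + n := max_le h3 (by linarith)
      linarith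
    · have h0 : ((n : ℝ) : AddCircle (1:ℝ)) = 0 :=
        (AddCircle.coe_eq_zero_iff (1:ℝ)).2 ⟨n, by simp⟩
      change ((max a (a' + n) - n : ℝ) : AddCircle (1:ℝ)) = _
      rw [AddCircle.coe_sub, h0, sub_zero]

/-- For a finite connected circular arc graph `G` with minimum degree at
least 2, `diam(G) ≤ rc(G) ≤ diam(G) + 4`. -/
theorem stmt_7 {V : Type*} [Fintype V] (G : SimpleGraph V) (hG : G.Connected)
    (hca : IsCircularArcGraph G) (hδ : ∀ v : V, 2 ≤ deg G v) :
    graphDiam G ≤ rc G ∧ rc G ≤ graphDiam G + 4 := by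
  obtain ⟨a, b, hab, hGa⟩ := hca
  have hGa' : ∀ u v, G.Adj u v ↔ u ≠ v ∧ ∃ n : ℤ, a u ≤ b v + n ∧ a v + n ≤ b u := by
    intro u v
    constructor
    · intro h
      exact ⟨h.ne, ((arc_iff _ _ _ _).1 ((hGa u v h.ne).1 h)).2.2⟩
    · rintro ⟨hne, h⟩
      exact (hGa u v hne).2 ((arc_iff _ _ _ _).2 ⟨hab u, hab v, h⟩)
  have hup := upper G hG a b hab hGa' hδ
  refine ⟨?_, Nat.sInf_le hup⟩
  have hne : {n | ∃ c : Sym2 V → ℕ, (∀ e ∈ G.edgeSet, c e < n) ∧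
      RainbowConnectedUnder G c}.Nonempty := ⟨_, hup⟩
  obtain ⟨c, hc, hrc⟩ := Nat.sInf_mem hne
  obtain ⟨v0⟩ := hG.nonempty
  refine csSup_le ⟨_, (v0, v0), rfl⟩ ?_
  rintro _ ⟨⟨u, v⟩, rfl⟩
  obtain ⟨p, -, hp⟩ := hrc u v
  refine (SimpleGraph.dist_le p).trans ?_
  have hsub : (p.edges.map c) ⊆ List.range (rc G) := by
    intro t ht
    obtain ⟨e, he, rfl⟩ := List.mem_map.1 ht
    exact List.mem_range.2 (hc e (p.edges_subset_edgeSet he))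
  have := (List.subperm_of_subset hp hsub).length_le
  simpa using this
end

section
/- Let G be a finite connected simple chordal graph with no bridges. Then rc(G) ≤ 3 · rad(G), where rad(G) is the radius of G. -/
open SimpleGraph Set

/-- For a finite connected bridge-less chordal graph `G`,
`rc(G) ≤ 3 · rad(G)`. -/
theorem aux_triangle {V : Type*} (G : SimpleGraph V)
    (hchordal : IsChordal G) (hbf : ∀ e : Sym2 V, ¬ G.IsBridge e) {x y : V} (hxy : G.Adj x y) :
    ∃ z, G.Adj x z ∧ G.Adj z y := by
  classical
  set H := G.deleteEdges {s(x, y)} with hH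
  have hr : H.Reachable x y := by
    have := hbf s(x, y)
    rw [isBridge_iff] at this
    by_contra hcon
    apply this
    first
      | exact ⟨hxy, hcon⟩
      | exact hcon
  have hHadj : ∀ a b, H.Adj a b ↔ G.Adj a b ∧ ¬ ((a = x ∧ b = y) ∨ (a = y ∧ b = x)) := by
    intro a b
    simp [hH, deleteEdges_adj]
  obtain ⟨p, hp⟩ := hr.exists_walk_length_eq_dist
  set m := p.length with hm
  have hstep : ∀ i, i < m → H.Adj (p.getVert i) (p.getVert (i+1)) := fun i hi =>
    p.adj_getVert_succ hi
  have h0 : p.getVert 0 = x := p.getVert_zero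
  have hmm : p.getVert m = y := p.getVert_length
  have hne : x ≠ y := hxy.ne
  have hm0 : m ≠ 0 := by
    intro h
    rw [h] at hmm
    exact hne (h0.symm.trans hmm)
  have hm1 : m ≠ 1 := by
    intro h
    have := hstep 0 (by omega)
    rw [h] at hmm
    rw [h0] at this
    simp only [zero_add] at this
    rw [hmm, hHadj] at this
    exact this.2 (Or.inl ⟨rfl, rfl⟩)
  have hd : ∀ i, i ≤ m → H.dist x (p.getVert i) = i := by
    intro i hi
    have h1 : H.dist x (p.getVert i) ≤ i := by
      have := dist_le (p.take i)
      rw [Walk.take_length] at this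
      exact this.trans (min_le_left _ _)
    have h2 : H.dist (p.getVert i) y ≤ m - i := by
      have := dist_le (p.drop i)
      rwa [Walk.drop_length] at this
    obtain ⟨q, hq⟩ := (p.take i).reachable.exists_walk_length_eq_dist
    obtain ⟨q', hq'⟩ := (p.drop i).reachable.exists_walk_length_eq_dist
    have := dist_le (q.append q')
    rw [Walk.length_append] at this
    omega
  have hinj : ∀ i j, i ≤ m → j ≤ m → p.getVert i = p.getVert j → i = j := by
    intro i j hi hj h
    rw [← hd i hi, h, hd j hj]
  have hadjlt : ∀ i j, i ≤ m → j ≤ m → H.Adj (p.getVert i) (p.getVert j) → j ≤ i + 1 := by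
    intro i j hi hj h
    obtain ⟨q, hq⟩ := (p.take i).reachable.exists_walk_length_eq_dist
    have := dist_le (q.concat h)
    rw [Walk.length_concat, hq, hd i hi, hd j hj] at this
    exact this
  have hHiff : ∀ i j, i ≤ m → j ≤ m →
      (H.Adj (p.getVert i) (p.getVert j) ↔ (j = i + 1 ∨ i = j + 1)) := by
    intro i j hi hj
    constructor
    · intro h
      have h1 := hadjlt i j hi hj h
      have h2 := hadjlt j i hj hi h.symm
      have h3 : i ≠ j := by rintro rfl; exact h.ne rfl
      omega
    · rintro (rfl | rfl)
      · exact hstep i (by omega)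
      · exact (hstep j (by omega)).symm
  have hGiff : ∀ i j, i ≤ m → j ≤ m →
      (G.Adj (p.getVert i) (p.getVert j) ↔
        (j = i + 1 ∨ i = j + 1 ∨ (i = 0 ∧ j = m) ∨ (i = m ∧ j = 0))) := by
    intro i j hi hj
    have hx : ∀ i, i ≤ m → (p.getVert i = x ↔ i = 0) := fun i hi =>
      ⟨fun h => hinj i 0 hi (by omega) (h.trans h0.symm), fun h => by rw [h, h0]⟩
    have hy : ∀ i, i ≤ m → (p.getVert i = y ↔ i = m) := fun i hi =>
      ⟨fun h => hinj i m hi le_rfl (h.trans hmm.symm), fun h => by rw [h, hmm]⟩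
    have h1 := hHiff i j hi hj
    rw [hHadj, hx i hi, hx j hj, hy i hi, hy j hj] at h1
    constructor
    · intro h
      by_cases hc : (i = 0 ∧ j = m) ∨ (i = m ∧ j = 0)
      · exact Or.inr (Or.inr hc)
      · rcases h1.1 ⟨h, hc⟩ with h | h <;> simp [h]
    · rintro (h | h | ⟨rfl, rfl⟩ | ⟨rfl, rfl⟩)
      · exact (h1.2 (Or.inl h)).1
      · exact (h1.2 (Or.inr h)).1
      · rw [h0, hmm]; exact hxy
      · rw [h0, hmm]; exact hxy.symm
  by_cases hm2 : m = 2
  · refine ⟨p.getVert 1, ?_, ?_⟩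
    · have h := (hGiff 0 1 (by omega) (by omega)).2 (by omega)
      rwa [h0] at h
    · have h := (hGiff 1 m (by omega) (by omega)).2 (by omega)
      rwa [hmm] at h
  · exfalso
    refine (hchordal (m + 1) (by omega)).false
      ⟨⟨fun i => p.getVert i.val, ?_⟩, ?_⟩
    · intro i j h
      exact Fin.ext (hinj _ _ (by omega) (by omega) h)
    · intro i j
      change G.Adj (p.getVert i.val) (p.getVert j.val) ↔ _
      rw [hGiff _ _ (by omega) (by omega), cycleGraph_adj', Fin.val_sub, Fin.val_sub]
      obtain ⟨i, hi⟩ := i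
      obtain ⟨j, hj⟩ := j
      simp only
      have key : ∀ a b : ℕ, a < m + 1 → b < m + 1 →
          ((m + 1 - b + a) % (m + 1) = 1 ↔ (a = b + 1 ∨ (a = 0 ∧ b = m))) := by
        intro a b ha hb
        rcases lt_or_ge a b with h | h
        · rw [Nat.mod_eq_of_lt (by omega)]; omega
        · rw [show m + 1 - b + a = (a - b) + (m + 1) by omega, Nat.add_mod_right,
            Nat.mod_eq_of_lt (by omega)]; omega
      rw [key i j hi hj, key j i hj hi]
      omega

theorem aux_step {V : Type*} [Finite V] (G : SimpleGraph V) (D N : Set V)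
    (hDN : ∀ x ∈ N, x ∉ D)
    (hN : ∀ x ∈ N, ∃ y ∈ D, G.Adj x y ∧ ∃ z ∈ D ∪ N, G.Adj x z ∧ z ≠ y)
    (k : ℕ) (c : Sym2 V → ℕ)
    (hlt : ∀ a ∈ D, ∀ b ∈ D, G.Adj a b → c s(a, b) < k)
    (hc : ∀ u ∈ D, ∀ w ∈ D, ∃ p : G.Walk u w, (p.edges.map c).Nodup ∧ ∀ s ∈ p.support, s ∈ D) :
    ∃ c' : Sym2 V → ℕ,
      (∀ a ∈ D ∪ N, ∀ b ∈ D ∪ N, G.Adj a b → c' s(a, b) < k + 3) ∧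
      (∀ u ∈ D ∪ N, ∀ w ∈ D ∪ N, ∃ p : G.Walk u w,
        (p.edges.map c').Nodup ∧ ∀ s ∈ p.support, s ∈ D ∪ N) := by
  classical
  obtain ⟨A, -, hA⟩ := (Set.toFinite {A : Set V | (∀ x ∈ A, x ∈ N ∧ ∃ y ∈ N, G.Adj x y) ∧
    ∀ x ∈ A, ∀ y ∈ A, ¬ G.Adj x y}).exists_le_maximal (a := ∅) (by simp)
  have hA1 := hA.prop.1
  have hA2 := hA.prop.2
  have hA3 : ∀ x ∈ N, (∃ y ∈ N, G.Adj x y) → x ∉ A → ∃ y ∈ A, G.Adj x y := by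
    intro x hx hy hxA
    by_contra! hcon
    apply hxA
    refine hA.le_of_ge (y := insert x A) ⟨?_, ?_⟩ (Set.subset_insert _ _) (Set.mem_insert _ _)
    · rintro z (rfl | hz)
      · exact ⟨hx, hy⟩
      · exact hA1 z hz
    · rintro z (rfl | hz) w (rfl | hw)
      · exact G.loopless.irrefl _
      · exact hcon w hw
      · exact fun h => hcon z hz h.symm
      · exact hA2 z hz w hw
  choose! f hfD hfadj g hgDN hgadj hgf using hN
  let Q : V → V → Prop := fun x y => x ∈ A ∨ ((¬ ∃ y ∈ N, G.Adj x y) ∧ y = f x)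
  let c' : Sym2 V → ℕ := fun e =>
    if ∀ v ∈ e, v ∈ D then c e
    else if ∃ x ∈ e, x ∉ D ∧ ∃ y ∈ e, y ∈ D ∧ Q x y then k
    else if ∃ y ∈ e, y ∈ D then k + 1 else k + 2
  have cDD : ∀ a ∈ D, ∀ b ∈ D, c' s(a, b) = c s(a, b) := by
    intro a ha b hb
    simp [c', ha, hb]
  have cQ : ∀ x ∉ D, ∀ y ∈ D, Q x y → c' s(x, y) = k := by
    intro x hx y hy hq
    simp [c', hx, hy, hq]
  have cnQ : ∀ x ∉ D, ∀ y ∈ D, ¬ Q x y → c' s(x, y) = k + 1 := by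
    intro x hx y hy hq
    simp [c', hx, hy, hq]
  have cNN : ∀ x ∉ D, ∀ y ∉ D, c' s(x, y) = k + 2 := by
    intro x hx y hy
    simp [c', hx, hy]
  let E : V → Set ℕ → Prop := fun x S => ∃ d ∈ D, ∃ p : G.Walk x d,
    (p.edges.map c').Nodup ∧ (∀ s ∈ p.support, s ∈ D ∪ N) ∧ ∀ t ∈ p.edges.map c', t ∈ S
  have Emono : ∀ x S T, S ⊆ T → E x S → E x T := by
    rintro x S T hST ⟨d, hd, p, h1, h2, h3⟩
    exact ⟨d, hd, p, h1, h2, fun t ht => hST (h3 t ht)⟩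
  have E1 : ∀ x ∈ N, ∀ y ∈ D, G.Adj x y → E x {c' s(x, y)} := by
    intro x hx y hy h
    refine ⟨y, hy, Walk.cons h Walk.nil, by simp, ?_, by simp⟩
    simp [hx, hy]
  have E2 : ∀ x ∈ N, ∀ z ∈ N, ∀ y ∈ D, G.Adj x z → G.Adj z y → c' s(x, z) ≠ c' s(z, y) →
      E x {c' s(x, z), c' s(z, y)} := by
    intro x hx z hz y hy h h' hne
    refine ⟨y, hy, Walk.cons h (Walk.cons h' Walk.nil), by simp [hne], ?_, by simp⟩
    simp [hx, hy, hz]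
  have key : ∀ u ∈ D ∪ N, (E u {k} ∧ E u {k + 1, k + 2}) ∨ (E u {k + 1} ∧ E u {k, k + 2}) := by
    rintro u (hu | hu)
    · have h0 : E u ∅ := ⟨u, hu, Walk.nil, by simp, by simp [hu], by simp⟩
      exact Or.inl ⟨Emono _ _ _ (by simp) h0, Emono _ _ _ (by simp) h0⟩
    have huD := hDN u hu
    by_cases hiso : ∃ y ∈ N, G.Adj u y
    · by_cases huA : u ∈ A
      · left
        obtain ⟨z, hz, huz⟩ := hiso
        have hzA : z ∉ A := fun h => hA2 _ huA _ h huz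
        have hzD := hDN z hz
        have e1 := cQ u huD _ (hfD u hu) (Or.inl huA)
        have e2 := cNN u huD z hzD
        have e3 := cnQ z hzD _ (hfD z hz) (by
          rintro (h | h)
          · exact hzA h
          · exact h.1 ⟨u, hu, huz.symm⟩)
        have := E1 u hu _ (hfD u hu) (hfadj u hu)
        have h2 := E2 u hu z hz _ (hfD z hz) huz (hfadj z hz) (by omega)
        rw [e1] at this
        rw [e2, e3, Set.pair_comm] at h2
        exact ⟨this, h2⟩
      · right
        obtain ⟨z, hzA, huz⟩ := hA3 u hu hiso huA
        have hz := (hA1 z hzA).1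
        have hzD := hDN z hz
        have e1 := cnQ u huD _ (hfD u hu) (by
          rintro (h | h)
          · exact huA h
          · exact h.1 hiso)
        have e2 := cNN u huD z hzD
        have e3 := cQ z hzD _ (hfD z hz) (Or.inl hzA)
        have := E1 u hu _ (hfD u hu) (hfadj u hu)
        have h2 := E2 u hu z hz _ (hfD z hz) huz (hfadj z hz) (by omega)
        rw [e1] at this
        rw [e2, e3, Set.pair_comm] at h2
        exact ⟨this, h2⟩
    · left
      have hgD : g u ∈ D := by
        rcases hgDN u hu with h | h
        · exact h
        · exact absurd ⟨_, h, hgadj u hu⟩ hiso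
      have e1 := cQ u huD _ (hfD u hu) (Or.inr ⟨hiso, rfl⟩)
      have e2 := cnQ u huD _ hgD (by
          rintro (h | h)
          · exact hiso (hA1 u h).2
          · exact hgf u hu h.2)
      have h1 := E1 u hu _ (hfD u hu) (hfadj u hu)
      have h2 := E1 u hu _ hgD (hgadj u hu)
      rw [e1] at h1
      rw [e2] at h2
      exact ⟨h1, Emono _ _ _ (by simp) h2⟩
  refine ⟨c', ?_, ?_⟩
  · intro a _ b _ hab
    by_cases h : ∀ v ∈ s(a, b), v ∈ D
    · have ha := h a (by simp)
      have hb := h b (by simp)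
      rw [cDD a ha b hb]
      have := hlt a ha b hb hab
      omega
    · simp only [c', if_neg h]
      split_ifs <;> omega
  · intro u hu w hw
    have join : ∀ S T : Set ℕ, Disjoint S T → (∀ t ∈ S, k ≤ t) → (∀ t ∈ T, k ≤ t) →
        E u S → E w T → ∃ p : G.Walk u w,
        (p.edges.map c').Nodup ∧ ∀ s ∈ p.support, s ∈ D ∪ N := by
      rintro S T hST hS hT ⟨d, hd, p, hp1, hp2, hp3⟩ ⟨d', hd', q, hq1, hq2, hq3⟩
      obtain ⟨r, hr1, hr2⟩ := hc d hd d' hd'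
      have hedge : ∀ e ∈ r.edges, c' e = c e ∧ c e < k := by
        intro e
        induction e with
        | _ a b =>
          intro he
          have ha := hr2 a (r.fst_mem_support_of_mem_edges he)
          have hb := hr2 b (r.snd_mem_support_of_mem_edges he)
          exact ⟨cDD a ha b hb, hlt a ha b hb (r.adj_of_mem_edges he)⟩
      have hmap : r.edges.map c' = r.edges.map c :=
        List.map_congr_left fun e he => (hedge e he).1
      have hr3 : ∀ t ∈ r.edges.map c', t < k := by
        intro t ht
        obtain ⟨e, he, rfl⟩ := List.mem_map.1 ht
        rw [(hedge e he).1]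
        exact (hedge e he).2
      refine ⟨p.append (r.append q.reverse), ?_, ?_⟩
      · rw [Walk.edges_append, Walk.edges_append, Walk.edges_reverse, List.map_append,
          List.map_append, List.map_reverse, List.nodup_append', List.nodup_append',
          List.nodup_reverse]
        refine ⟨hp1, ⟨hmap ▸ hr1, hq1, ?_⟩, ?_⟩
        · intro t ht ht'
          have := hr3 t ht
          have := hT t (hq3 t (List.mem_reverse.1 ht'))
          omega
        · intro t ht ht'
          have h1 := hp3 t ht
          rcases List.mem_append.1 ht' with h | h
          · have := hr3 t h
            have := hS t h1
            omega
          · exact Set.disjoint_left.1 hST h1 (hq3 t (List.mem_reverse.1 h))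
      · intro s hs
        rw [Walk.mem_support_append_iff, Walk.mem_support_append_iff, Walk.support_reverse,
          List.mem_reverse] at hs
        rcases hs with h | h | h
        · exact hp2 s h
        · exact Or.inl (hr2 s h)
        · exact hq2 s h
    rcases key u hu with ⟨h1, h2⟩ | ⟨h1, h2⟩ <;> rcases key w hw with ⟨h3, h4⟩ | ⟨h3, h4⟩
    · exact join _ _ (by simp) (by simp) (by simp) h1 h4
    · exact join _ _ (by simp) (by simp) (by simp) h1 h3
    · exact join _ _ (by simp) (by simp) (by simp) h1 h3
    · exact join _ _ (by simp) (by simp) (by simp) h1 h4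

/-- For a finite connected bridge-less chordal graph `G`,
`rc(G) ≤ 3 · rad(G)`. -/
theorem stmt_8 {V : Type*} [Fintype V] (G : SimpleGraph V) (hG : G.Connected)
    (hchordal : IsChordal G) (hbf : ∀ e : Sym2 V, ¬ G.IsBridge e) :
    rc G ≤ 3 * graphRadius G := by
  classical
  have := hG.nonempty
  obtain ⟨v, hv⟩ : graphRadius G ∈ Set.range fun v => ecc G v :=
    Nat.sInf_mem (Set.range_nonempty _)
  rw [← hv]
  have hecc : ∀ u, G.dist v u ≤ ecc G v := fun u =>
    le_csSup (Set.finite_range _).bddAbove ⟨u, rfl⟩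
  have main : ∀ i : ℕ, ∃ c : Sym2 V → ℕ,
      (∀ a ∈ {u | G.dist v u ≤ i}, ∀ b ∈ {u | G.dist v u ≤ i}, G.Adj a b → c s(a, b) < 3 * i) ∧
      (∀ u ∈ {u | G.dist v u ≤ i}, ∀ w ∈ {u | G.dist v u ≤ i}, ∃ p : G.Walk u w,
        (p.edges.map c).Nodup ∧ ∀ s ∈ p.support, s ∈ {u | G.dist v u ≤ i}) := by
    intro i
    induction i with
    | zero =>
      have h0 : ∀ u, u ∈ {u | G.dist v u ≤ 0} → u = v := by
        intro u hu
        have hu : G.dist v u ≤ 0 := hu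
        exact (hG.dist_eq_zero_iff.1 (by omega)).symm
      refine ⟨fun _ => 0, ?_, ?_⟩
      · intro a ha b hb hab
        rw [h0 a ha, h0 b hb] at hab
        exact absurd rfl hab.ne
      · intro a ha b hb
        obtain rfl := h0 a ha
        obtain rfl := h0 b hb
        exact ⟨Walk.nil, by simp, by simp⟩
    | succ i ih =>
      obtain ⟨c, h1, h2⟩ := ih
      have hun : {u | G.dist v u ≤ i + 1} = {u | G.dist v u ≤ i} ∪ {u | G.dist v u = i + 1} := by
        ext u
        simp only [Set.mem_ofPred_eq, Set.mem_union]
        omega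
      rw [hun]
      refine aux_step G _ _ ?_ ?_ (3 * i) c h1 h2
      · intro x hx hx'
        simp only [Set.mem_ofPred_eq] at hx hx'
        omega
      · intro x hx
        simp only [Set.mem_ofPred_eq] at hx
        obtain ⟨p, hp⟩ := hG.exists_walk_length_eq_dist v x
        have hadj := p.adj_getVert_succ (i := i) (by omega)
        rw [show i + 1 = p.length by omega, p.getVert_length] at hadj
        have hd : G.dist v (p.getVert i) ≤ i := by
          have := dist_le (p.take i)
          rw [Walk.take_length] at this
          exact this.trans (min_le_left _ _)
        obtain ⟨z, hz1, hz2⟩ := aux_triangle G hchordal hbf hadj.symm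
        refine ⟨_, hd, hadj.symm, z, ?_, hz1, hz2.ne⟩
        rw [← hun]
        have := hG.dist_triangle (u := v) (v := p.getVert i) (w := z)
        have h1 := dist_eq_one_iff_adj.2 hz2.symm
        simp only [Set.mem_ofPred_eq]
        omega
  obtain ⟨c, h1, h2⟩ := main (ecc G v)
  refine Nat.sInf_le ⟨c, ?_, ?_⟩
  · intro e
    induction e with
    | _ a b => exact fun he => h1 a (hecc a) b (hecc b) he
  · intro u w
    obtain ⟨p, hp, -⟩ := h2 u (hecc u) w (hecc w)
    exact ⟨p.bypass, p.bypass_isPath, hp.sublist ((p.edges_bypass_sublist_edges).map c)⟩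
end
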